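/- Let Γ = PSL(2, ℤ[ω]). Call a subgroup Δ ≤ Γ good if there exists a subgroup Ω ≤ Δ, normal in Δ, such that: the index [Γ : Δ] is finite and at most 12, the index [Δ : Ω] equals 5, Δ admits a surjective homomorphism onto ℤ (i.e. b₁(Δ) ≥ 1), and Ω admits a surjective homomorphism onto ℤ⁵ (i.e. b₁(Ω) ≥ 5). Then any two good subgroups of Γ are conjugate in Γ; moreover every good subgroup Δ has index exactly 12 in Γ and abelianization isomorphic to ℤ × ℤ/5ℤ (this is the subgroup Γ_s, the fundamental group of the sister of the figure-eight knot complement). -/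

import Mathlib

/-- The Eisenstein integers `ℤ[ω]`, the ring of integers of `ℚ(ω)` with
`ω² + ω + 1 = 0`. -/
abbrev Eisenstein : Type := NumberField.RingOfIntegers (CyclotomicField 3 ℚ)

/-- `PSL(2,R)`: the quotient of `SL(2,R)` by its center. -/
abbrev PSL2 (R : Type*) [CommRing R] : Type _ :=
  Matrix.SpecialLinearGroup (Fin 2) R ⧸
    Subgroup.center (Matrix.SpecialLinearGroup (Fin 2) R)

/-- Two subgroups are conjugate. -/
def SubgroupConj (G : Type*) [Group G] (H K : Subgroup G) : Prop :=
  ∃ g : G, Subgroup.map (MulAut.conj g).toMonoidHom H = K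

/-- A subgroup `Δ ≤ Γ = PSL(2, ℤ[ω])` is *good* if it has finite index at most
`12`, surjects onto `ℤ` (i.e. `b₁(Δ) ≥ 1`), and has a normal subgroup `Ω` of
index `5` surjecting onto `ℤ⁵` (i.e. `b₁(Ω) ≥ 5`). -/
def GoodSubgroup (Δ : Subgroup (PSL2 Eisenstein)) : Prop :=
  Δ.FiniteIndex ∧ Δ.index ≤ 12 ∧
    (∃ f : Δ →* Multiplicative ℤ, Function.Surjective f) ∧
    ∃ Ω : Subgroup Δ, Ω.Normal ∧ Ω.index = 5 ∧
      ∃ g : Ω →* (Fin 5 → Multiplicative ℤ), Function.Surjective g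

/-!
Write `Γ = PSL(2, ℤ[ω])`. It is generated by two copies `⟨a, c⟩` and `⟨b, c⟩` of `A₄` with common
subgroup `⟨c⟩` of order three, where moreover `(ab)³ = 1`. For a subgroup `N` of finite index, a
Mayer–Vietoris argument bounds `b₁(N)` by one plus the number of orbits of `⟨c⟩` on `Γ/N` minus
the numbers of orbits of the two copies of `A₄`. The orbits are counted with Burnside's lemma.
Since torsion of order two or three does not see a normal subgroup of index five, the bound for
`Ω` becomes one in terms of the fixed points on `Γ/Δ`, and `b₁(Ω) ≥ 5` leaves only `[Γ : Δ] = 12`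
with `a`, `b` and `c` acting freely.

Both copies of `A₄` then act simply transitively on `Γ/Δ`, and the action is determined by how
these two regular actions are glued along `⟨c⟩`. By a finite search, the gluings with `(ab)³ = 1`
are, up to the choice of a base point, those of the sister group, of the figure-eight knot group
and of three groups with finite abelianization. The latter contradict `b₁(Δ) ≥ 1`. The
figure-eight knot group is excluded because no root of its Alexander polynomial `X² - 3X + 1` is a
root of unity, so that its normal subgroups of index five have `b₁ ≤ 1`.
-/

namespace SubgroupConj

open scoped Pointwise

variable {G : Type*} [Group G] {H K L : Subgroup G}

theorem symm : SubgroupConj G H K → SubgroupConj G K H := by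
  rintro ⟨g, rfl⟩
  exact ⟨g⁻¹, show MulAut.conj g⁻¹ • MulAut.conj g • H = H by rw [map_inv, inv_smul_smul]⟩

theorem trans : SubgroupConj G H K → SubgroupConj G K L → SubgroupConj G H L := by
  rintro ⟨g, rfl⟩ ⟨k, rfl⟩
  exact ⟨k * g, show MulAut.conj (k * g) • H = MulAut.conj k • MulAut.conj g • H by
    rw [map_mul, mul_smul]⟩

end SubgroupConj

namespace GoodSubgroup

section FirstBetti

variable {N : Type*} [Group N]

/-- The first Betti number of a group, as the dimension of the space of its characters with values
in `ℚ`. It takes the junk value `0` when that space is infinite-dimensional. -/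
noncomputable def firstBetti (N : Type*) [Group N] : ℕ :=
  Module.finrank ℚ (Additive N →+ ℚ)

instance [Group.FG N] : FiniteDimensional ℚ (Additive N →+ ℚ) := by
  obtain ⟨S, hS⟩ := AddGroup.fg_def.mp (inferInstance : AddGroup.FG (Additive N))
  let restrict : (Additive N →+ ℚ) →ₗ[ℚ] (S → ℚ) :=
    { toFun := fun χ s => χ s, map_add' := fun _ _ => rfl, map_smul' := fun _ _ => rfl }
  refine Module.Finite.of_injective restrict fun χ ψ h => ?_
  exact AddMonoidHom.eq_of_eqOn_dense hS fun s hs => congrFun h ⟨s, hs⟩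

/-- The rational character underlying an integer-valued one. -/
def ratCharacter (f : N →* Multiplicative ℤ) : Additive N →+ ℚ :=
  (Int.castAddHom ℚ).comp (MonoidHom.toAdditiveLeft f)

theorem ratCharacter_apply (f : N →* Multiplicative ℤ) (n : N) :
    ratCharacter f (.ofMul n) = ((f n).toAdd : ℤ) :=
  rfl

theorem exists_character_ne_zero {f : N →* Multiplicative ℤ} (hf : Function.Surjective f) :
    ∃ χ : Additive N →+ ℚ, χ ≠ 0 := by
  obtain ⟨n, hn⟩ := hf (.ofAdd 1)
  refine ⟨ratCharacter f, fun h => ?_⟩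
  simpa [ratCharacter_apply, hn] using DFunLike.congr_fun h (.ofMul n)

theorem card_le_firstBetti [Group.FG N] {ι : Type*} [Fintype ι] {f : N →* (ι → Multiplicative ℤ)}
    (hf : Function.Surjective f) : Fintype.card ι ≤ firstBetti N := by
  classical
  let χ (i : ι) : Additive N →+ ℚ := ratCharacter ((Pi.evalMonoidHom _ i).comp f)
  refine LinearIndependent.fintype_card_le_finrank (b := χ) ?_
  refine Fintype.linearIndependent_iff.mpr fun r hr i => ?_
  obtain ⟨n, hn⟩ := hf (Pi.mulSingle i (.ofAdd 1))
  have hχ (j : ι) : χ j (.ofMul n) = if j = i then 1 else 0 := by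
    by_cases hj : j = i
    · subst hj; simp [χ, ratCharacter_apply, hn]
    · simp [χ, ratCharacter_apply, hn, hj]
  simpa [hχ] using DFunLike.congr_fun hr (.ofMul n)

end FirstBetti

section MayerVietoris

variable {G : Type*} [Group G] (H N : Subgroup G)

/-- The orbits of a subgroup of `G` on a `G`-set. -/
abbrev Orbits (X : Type*) [MulAction G X] : Type _ :=
  MulAction.orbitRel.Quotient H X

/-- The functions on `G` that are left invariant under `H` and along `N` increase by a character
of `N`. For finite `H` they compute the rational cohomology of the orbifold covering of `H \ G` by
`H \ G / N`: see `finrank_primitives`. -/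
def primitives : Submodule ℚ (G → ℚ) where
  carrier := {F | (∀ h ∈ H, ∀ g, F (h * g) = F g) ∧ ∀ g, ∀ n ∈ N, F (g * n) - F g = F n - F 1}
  add_mem' {F F'} hF hF' := by
    refine ⟨fun h hh g => by simp [hF.1 h hh, hF'.1 h hh], fun g n hn => ?_⟩
    simp only [Pi.add_apply]
    linear_combination hF.2 g n hn + hF'.2 g n hn
  zero_mem' := by simp
  smul_mem' r F hF := by
    refine ⟨fun h hh g => by simp [hF.1 h hh], fun g n hn => ?_⟩
    simp only [Pi.smul_apply, smul_eq_mul]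
    linear_combination r * hF.2 g n hn

variable {H N}

theorem primitives_anti {H' : Subgroup G} (h : H' ≤ H) : primitives H N ≤ primitives H' N :=
  fun _ hF => ⟨fun k hk => hF.1 k (h hk), hF.2⟩

variable (H N) in
/-- The character by which a primitive increases along `N`. -/
def increment : primitives H N →ₗ[ℚ] (Additive N →+ ℚ) where
  toFun F := AddMonoidHom.mk' (fun n => F.1 n.toMul - F.1 1) fun n m => by
    have h := F.2.2 n.toMul m.toMul m.toMul.2
    simp only [toMul_add, Subgroup.coe_mul]
    linear_combination h
  map_add' F F' := by ext; simp; ring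
  map_smul' r F := by ext; simp; ring

theorem increment_apply (F : primitives H N) (n : N) :
    increment H N F (.ofMul n) = F.1 n - F.1 1 :=
  rfl

theorem exists_apply_mul_eq_add (χ : Additive N →+ ℚ) :
    ∃ F : G → ℚ, ∀ g, ∀ n : N, F (g * n) = F g + χ (.ofMul n) := by
  have hmem (g : G) : (g : G ⧸ N).out⁻¹ * g ∈ N := by
    rw [← QuotientGroup.eq, QuotientGroup.out_eq']
  refine ⟨fun g => χ (.ofMul ⟨_, hmem g⟩), fun g n => ?_⟩
  have hg : ((g * n : G) : G ⧸ N) = g := by simp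
  refine .trans (congrArg χ ?_) (map_add χ _ _)
  exact congrArg Additive.ofMul (Subtype.ext (by simp [hg, mul_assoc]))

theorem increment_surjective [Finite H] : Function.Surjective (increment H N) := by
  intro χ
  have := Fintype.ofFinite H
  obtain ⟨F, hF⟩ := exists_apply_mul_eq_add χ
  let A (g : G) : ℚ := (∑ h : H, F (h * g)) / Fintype.card H
  have A_inv (h : G) (hh : h ∈ H) (g : G) : A (h * g) = A g := by
    simp only [A, ← mul_assoc]
    congr 1
    exact Fintype.sum_equiv (Equiv.mulRight (⟨h, hh⟩ : H)) _ _ fun _ => rfl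
  have A_mul (g : G) (n : N) : A (g * n) = A g + χ (.ofMul n) := by
    simp only [A, ← mul_assoc, hF, Finset.sum_add_distrib, Finset.sum_const, Finset.card_univ,
      nsmul_eq_mul]
    field_simp
  have A_coe (n : N) : A n - A 1 = χ (.ofMul n) := by
    rw [sub_eq_iff_eq_add', ← A_mul, one_mul]
  refine ⟨⟨A, A_inv, fun g n hn => ?_⟩, AddMonoidHom.ext fun n => A_coe n.toMul⟩
  rw [A_coe ⟨n, hn⟩, A_mul g ⟨n, hn⟩, add_sub_cancel_left]

variable (H N) in
/-- The projection of `G` to the set `H \ G / N`. -/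
def doubleCosetMk (g : G) : Orbits H (G ⧸ N) :=
  Quotient.mk'' (g : G ⧸ N)

theorem doubleCosetMk_surjective : Function.Surjective (doubleCosetMk H N) :=
  Quotient.mk''_surjective.comp QuotientGroup.mk_surjective

theorem doubleCosetMk_mul_right (g : G) {n : G} (hn : n ∈ N) :
    doubleCosetMk H N (g * n) = doubleCosetMk H N g :=
  congrArg Quotient.mk'' (QuotientGroup.mk_mul_of_mem g hn)

theorem doubleCosetMk_mul_left {h : G} (hh : h ∈ H) (g : G) :
    doubleCosetMk H N (h * g) = doubleCosetMk H N g :=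
  Quotient.sound' ⟨⟨h, hh⟩, rfl⟩

theorem mem_ker_increment_iff {F : primitives H N} :
    F ∈ LinearMap.ker (increment H N) ↔ ∃ u, F.1 = u ∘ doubleCosetMk H N := by
  constructor
  · intro hF
    have hN (g : G) (n : G) (hn : n ∈ N) : F.1 (g * n) = F.1 g := by
      have := DFunLike.congr_fun (LinearMap.mem_ker.mp hF) (.ofMul ⟨n, hn⟩)
      rw [increment_apply, ← F.2.2 g n hn] at this
      exact sub_eq_zero.mp this
    have hfactor : ∀ g g', doubleCosetMk H N g = doubleCosetMk H N g' → F.1 g = F.1 g' := by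
      intro g g' h
      obtain ⟨⟨k, hk⟩, hkg⟩ := Quotient.exact' h.symm
      have hmem : (k * g)⁻¹ * g' ∈ N := QuotientGroup.eq.mp hkg
      rw [← F.2.1 k hk g, ← hN _ _ hmem, mul_inv_cancel_left]
    exact ⟨Function.extend (doubleCosetMk H N) F.1 0, funext fun g =>
      (Function.FactorsThrough.extend_apply (fun g g' => hfactor g g') 0 g).symm⟩
  · rintro ⟨u, hu⟩
    refine LinearMap.mem_ker.mpr (AddMonoidHom.ext fun n => ?_)
    have : doubleCosetMk H N n.toMul = doubleCosetMk H N 1 := by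
      rw [← one_mul (n.toMul : G), doubleCosetMk_mul_right _ n.toMul.2]
    change F.1 n.toMul - F.1 1 = 0
    simp [hu, this]

variable (H N) in
/-- The kernel of `increment H N` is the space of functions on `H \ G / N`. -/
noncomputable def kerIncrementEquiv :
    (Orbits H (G ⧸ N) → ℚ) ≃ₗ[ℚ] LinearMap.ker (increment H N) :=
  have hmem (u : Orbits H (G ⧸ N) → ℚ) : u ∘ doubleCosetMk H N ∈ primitives H N := by
    refine ⟨fun h hh g => by simp [doubleCosetMk_mul_left hh], fun g n hn => ?_⟩
    have := doubleCosetMk_mul_right (H := H) 1 hn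
    rw [one_mul] at this
    simp [doubleCosetMk_mul_right _ hn, this]
  LinearEquiv.ofBijective
    (((LinearMap.funLeft ℚ ℚ (doubleCosetMk H N)).codRestrict _ hmem).codRestrict _ fun u =>
      mem_ker_increment_iff.mpr ⟨u, rfl⟩)
    ⟨fun _ _ h => LinearMap.funLeft_injective_of_surjective ℚ ℚ _ doubleCosetMk_surjective
        (congrArg (fun F => F.1.1) h),
      fun F => (mem_ker_increment_iff.mp F.2).imp fun _ hu =>
        Subtype.ext (Subtype.ext hu.symm)⟩

theorem finrank_primitives_inf_le_one {P Q : Subgroup G} (hPQ : P ⊔ Q = ⊤) :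
    Module.finrank ℚ ↥(primitives P N ⊓ primitives Q N) ≤ 1 := by
  refine (Submodule.finrank_mono fun F hF => ?_).trans
    ((finrank_span_le_card ({1} : Set (G → ℚ))).trans_eq (by simp))
  let S : Subgroup G :=
    { carrier := {x | ∀ g, F (x * g) = F g}
      one_mem' := by simp
      mul_mem' := fun hx hy g => by rw [mul_assoc, hx, hy]
      inv_mem' := fun {x} hx g => by rw [← hx]; simp }
  have hS : (⊤ : Subgroup G) ≤ S := hPQ.symm.trans_le (sup_le hF.1.1 hF.2.1)
  refine Submodule.mem_span_singleton.mpr ⟨F 1, funext fun g => ?_⟩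
  simpa using (hS (Subgroup.mem_top g) 1).symm

variable [Group.FG N] [N.FiniteIndex]

instance : FiniteDimensional ℚ (primitives H N) := by
  have := Module.Finite.equiv (kerIncrementEquiv H N)
  have : Module.Finite ℚ (primitives H N ⧸ LinearMap.ker (increment H N)) :=
    Module.Finite.equiv (increment H N).quotKerEquivRange.symm
  exact Module.Finite.of_submodule_quotient (LinearMap.ker (increment H N))

theorem finrank_primitives [Finite H] : Module.finrank ℚ (primitives H N) =
    firstBetti N + Nat.card (Orbits H (G ⧸ N)) := by
  have := Fintype.ofFinite (Orbits H (G ⧸ N))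
  rw [← LinearMap.finrank_range_add_finrank_ker (increment H N),
    LinearMap.range_eq_top.mpr (increment_surjective (H := H) (N := N)), finrank_top,
    ← (kerIncrementEquiv H N).finrank_eq, Module.finrank_fintype_fun_eq_card,
    Nat.card_eq_fintype_card, firstBetti]

theorem firstBetti_add_card_add_card_le {P Q R : Subgroup G} [Finite P] [Finite Q]
    (hPQ : P ⊔ Q = ⊤) (hP : R ≤ P) (hQ : R ≤ Q) :
    firstBetti N + Nat.card (Orbits P (G ⧸ N)) + Nat.card (Orbits Q (G ⧸ N)) ≤
      Nat.card (Orbits R (G ⧸ N)) + 1 := by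
  have : Finite R := Finite.of_injective _ (Subgroup.inclusion_injective hP)
  have hsup := Submodule.finrank_mono (R := ℚ)
    (sup_le (primitives_anti (N := N) hP) (primitives_anti hQ))
  have hinf := finrank_primitives_inf_le_one (N := N) hPQ
  have hrank := Submodule.finrank_sup_add_finrank_inf_eq (primitives P N) (primitives Q N)
  simp only [finrank_primitives] at hsup hrank
  omega

end MayerVietoris

section Counting

variable {G : Type*} [Group G] {X : Type*} [MulAction G X]

theorem card_fixedBy_one : Nat.card (MulAction.fixedBy X (1 : G)) = Nat.card X := by
  rw [MulAction.fixedBy_one_eq_univ]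
  exact Nat.card_univ

theorem card_fixedBy_conj (g h : G) :
    Nat.card (MulAction.fixedBy X (g * h * g⁻¹)) = Nat.card (MulAction.fixedBy X h) := by
  rw [← MulAction.smul_fixedBy]
  exact Set.ncard_image_of_injective _ (MulAction.injective g)

theorem card_mul_card_orbits_range {P : Type*} [Group P] [Fintype P] [Finite X] (f : P →* G) :
    Fintype.card P * Nat.card (Orbits f.range X) =
      ∑ p, Nat.card (MulAction.fixedBy X (f p)) := by
  classical
  let : MulAction P X := MulAction.compHom X f
  have horbit : MulAction.orbitRel f.range X = MulAction.orbitRel P X := by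
    ext x y
    constructor
    · rintro ⟨⟨_, p, rfl⟩, h⟩
      exact ⟨p, h⟩
    · rintro ⟨p, h⟩
      exact ⟨⟨f p, p, rfl⟩, h⟩
  have := Fintype.ofFinite X
  have := Fintype.ofFinite (MulAction.orbitRel.Quotient P X)
  have hsum := MulAction.sum_card_fixedBy_eq_card_orbits_mul_card_group P X
  simp only [← Nat.card_eq_fintype_card (α := MulAction.fixedBy X _)] at hsum
  rw [Orbits, MulAction.orbitRel.Quotient, horbit, mul_comm, Nat.card_eq_fintype_card]
  exact hsum.symm

theorem mem_of_pow_eq_one_of_coprime {N : Subgroup G} [N.Normal] {g : G} {k : ℕ}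
    (hg : g ^ k = 1) (hk : k.Coprime N.index) : g ∈ N := by
  refine (QuotientGroup.eq_one_iff g).mp (orderOf_eq_one_iff.mp ?_)
  refine Nat.eq_one_of_dvd_coprimes hk (orderOf_dvd_of_pow_eq_one ?_) (orderOf_dvd_natCard _)
  rw [← QuotientGroup.mk_pow, hg, QuotientGroup.mk_one]

theorem mem_fixedBy_quotient_iff_of_coprime {N Δ : Subgroup G} (hN : N ≤ Δ)
    [(N.subgroupOf Δ).Normal] {g : G} {k : ℕ} (hg : g ^ k = 1) (hk : k.Coprime (N.relIndex Δ))
    (x : G) :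
    (x : G ⧸ N) ∈ MulAction.fixedBy (G ⧸ N) g ↔ (x : G ⧸ Δ) ∈ MulAction.fixedBy (G ⧸ Δ) g := by
  simp only [MulAction.mem_fixedBy, MulAction.Quotient.smul_coe, smul_eq_mul, QuotientGroup.eq]
  refine ⟨fun h => hN h, fun h => ?_⟩
  suffices ⟨(g * x)⁻¹ * x, h⟩ ∈ N.subgroupOf Δ from this
  refine mem_of_pow_eq_one_of_coprime (Subtype.ext ?_) hk
  calc ((g * x)⁻¹ * x) ^ k = (x⁻¹ * g⁻¹ * x⁻¹⁻¹) ^ k := by simp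
    _ = 1 := by rw [conj_pow, inv_pow, hg, inv_one, mul_one, mul_inv_cancel]

theorem card_fixedBy_quotient_of_coprime {N Δ : Subgroup G} (hN : N ≤ Δ)
    [(N.subgroupOf Δ).Normal] {g : G} {k : ℕ} (hg : g ^ k = 1)
    (hk : k.Coprime (N.relIndex Δ)) :
    Nat.card (MulAction.fixedBy (G ⧸ N) g) =
      N.relIndex Δ * Nat.card (MulAction.fixedBy (G ⧸ Δ) g) := by
  let e := Subgroup.quotientEquivProdOfLE hN
  have he (y : G ⧸ N) :
      y ∈ MulAction.fixedBy (G ⧸ N) g ↔ (e y).1 ∈ MulAction.fixedBy (G ⧸ Δ) g := by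
    induction y using QuotientGroup.induction_on with
    | H x => exact mem_fixedBy_quotient_iff_of_coprime hN hg hk x
  have hcard := Nat.card_congr ((e.subtypeEquiv he).trans
    (Equiv.prodSubtypeFstEquivSubtypeProd (p := (· ∈ MulAction.fixedBy (G ⧸ Δ) g))))
  rwa [Nat.card_prod, mul_comm] at hcard

end Counting

/-- A normal form model of the tetrahedral group `A₄ = ⟨a, c ∣ a² = c³ = (ac)³ = 1⟩`: `c i` stands
for `cⁱ` and `cac i j` for `cⁱ a cʲ`. -/
inductive A4
  | c (i : Fin 3)
  | cac (i j : Fin 3)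
  deriving DecidableEq, Fintype

namespace A4

instance : Mul A4 where
  mul
    | c i, c k => c (i + k)
    | c i, cac k l => cac (i + k) l
    | cac i j, c k => cac i (j + k)
    | cac i j, cac k l => if j + k = 0 then c (i + l) else cac (i - (j + k)) (l - (j + k))

instance : One A4 := ⟨c 0⟩

instance : Inv A4 where
  inv
    | c i => c (-i)
    | cac i j => cac (-j) (-i)

instance : Group A4 :=
  Group.ofLeftAxioms (by decide +kernel) (by decide +kernel) (by decide +kernel)

/-- The involution `a` of the presentation of `A₄`. -/
def a : A4 := cac 0 0

/-- The subgroup of order three, as a homomorphism `i ↦ cⁱ`. -/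
def cHom : Multiplicative (Fin 3) →* A4 :=
  MonoidHom.mk' (fun i => c i.toAdd) fun _ _ => rfl

theorem cac_mul_cac (i j k l : Fin 3) : cac i j * cac k l =
    if j + k = 0 then c (i + l) else cac (i - (j + k)) (l - (j + k)) :=
  rfl

theorem eq_one_or_isConj : ∀ p : A4, p = 1 ∨ (p ≠ 1 ∧ p * p = 1 ∧ ∃ q, p = q * a * q⁻¹) ∨
    (p ≠ 1 ∧ p * p ≠ 1 ∧ ∃ q, p = q * c 1 * q⁻¹ ∨ p = q * (c 1)⁻¹ * q⁻¹) := by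
  decide +kernel

/-- The class equation `12 = 1 + 3 + 8` of `A₄`, where the two classes of elements of order three
are merged. -/
theorem sum_eq_of_conj_invariant (φ : A4 → ℕ) (hconj : ∀ p q, φ (q * p * q⁻¹) = φ p)
    (hinv : ∀ p, φ p⁻¹ = φ p) : ∑ p, φ p = φ 1 + 3 * φ a + 8 * φ (c 1) := by
  have hφ (p : A4) : φ p = if p = 1 then φ 1 else if p * p = 1 then φ a else φ (c 1) := by
    obtain rfl | ⟨h1, h2, q, hq⟩ | ⟨h1, h2, q, hq | hq⟩ := eq_one_or_isConj p
    · simp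
    · rw [if_neg h1, if_pos h2, hq, hconj]
    · rw [if_neg h1, if_neg h2, hq, hconj]
    · rw [if_neg h1, if_neg h2, hq, hconj, hinv]
  have hone : ({p | p = 1} : Finset A4).card = 1 := by decide +kernel
  have htwo : ({p ∈ {p | ¬p = 1} | p * p = 1} : Finset A4).card = 3 := by decide +kernel
  have hthree : ({p ∈ {p | ¬p = 1} | ¬p * p = 1} : Finset A4).card = 8 := by decide +kernel
  rw [Finset.sum_congr rfl fun p _ => hφ p]
  simp only [Finset.sum_ite, Finset.sum_const, hone, htwo, hthree, smul_eq_mul]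
  ring

end A4

section TetrahedralPair

variable {G : Type*} [Group G]

/-- The relations of the presentation `A₄ = ⟨a, c ∣ a² = c³ = (ac)³ = 1⟩`. -/
structure IsTetrahedralPair (a c : G) : Prop where
  mul_self_left : a * a = 1
  pow_three_right : c ^ 3 = 1
  mul_pow_three : (a * c) ^ 3 = 1

namespace IsTetrahedralPair

variable {a c : G} (h : IsTetrahedralPair a c)
include h

theorem pow_val_add (i j : Fin 3) : c ^ (i + j).val = c ^ i.val * c ^ j.val := by
  rw [← pow_add, Fin.val_add, ← pow_eq_pow_mod _ h.pow_three_right]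

theorem pow_two_right : c ^ 2 = c⁻¹ :=
  eq_inv_of_mul_eq_one_left (by rw [← pow_succ, h.pow_three_right])

theorem mul_pow_val_mul {m : Fin 3} (hm : m ≠ 0) :
    a * c ^ m.val * a = c ^ (-m).val * a * c ^ (-m).val := by
  have ha : a⁻¹ = a := inv_eq_of_mul_eq_one_left h.mul_self_left
  have hone : a * c * a = c ^ 2 * a * c ^ 2 := by
    have hac : a * c * a * (c * a * c) = 1 := by
      rw [← h.mul_pow_three]
      simp only [pow_succ, pow_zero, one_mul, mul_assoc]
    rw [eq_inv_of_mul_eq_one_left hac]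
    simp [ha, h.pow_two_right, mul_assoc]
  have htwo : a * c ^ 2 * a = c * a * c := by
    have := congrArg (·⁻¹) hone
    simpa [ha, h.pow_two_right, mul_assoc] using this
  fin_cases m
  · exact absurd rfl hm
  · simpa using hone
  · exact htwo.trans (by simp [show (-2 : Fin 3) = 1 from rfl])

/-- The homomorphism from `A₄` given by a pair of elements that satisfies its relations. -/
def hom : A4 →* G :=
  MonoidHom.mk'
    (fun
      | .c i => c ^ i.val
      | .cac i j => c ^ i.val * a * c ^ j.val)
    (by
      rintro (i | ⟨i, j⟩) (k | ⟨k, l⟩)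
      · exact h.pow_val_add i k
      · simp only [h.pow_val_add, mul_assoc]
      · simp only [h.pow_val_add, mul_assoc]
      · have hmid : c ^ i.val * a * c ^ j.val * (c ^ k.val * a * c ^ l.val) =
            c ^ i.val * (a * c ^ (j + k).val * a) * c ^ l.val := by
          simp only [h.pow_val_add, mul_assoc]
        rw [A4.cac_mul_cac]
        split_ifs with hjk
        · simp [hmid, hjk, h.mul_self_left, h.pow_val_add]
        · rw [hmid, h.mul_pow_val_mul hjk]
          simp only [sub_eq_add_neg, add_comm l, h.pow_val_add, mul_assoc])

theorem hom_c (i : Fin 3) : h.hom (.c i) = c ^ i.val :=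
  rfl

theorem hom_cac (i j : Fin 3) : h.hom (.cac i j) = c ^ i.val * a * c ^ j.val :=
  rfl

theorem hom_a : h.hom A4.a = a := by
  simp [A4.a, hom_cac]

theorem hom_c_one : h.hom (.c 1) = c := by
  simp [hom_c]

variable {X : Type*} [MulAction G X] [Finite X]

theorem twelve_mul_card_orbits :
    12 * Nat.card (Orbits h.hom.range X) = Nat.card X +
      3 * Nat.card (MulAction.fixedBy X a) + 8 * Nat.card (MulAction.fixedBy X c) := by
  rw [← show Fintype.card A4 = 12 from rfl, card_mul_card_orbits_range,
    A4.sum_eq_of_conj_invariant (fun p => Nat.card (MulAction.fixedBy X (h.hom p)))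
      (fun p q => by simp only [map_mul, map_inv, card_fixedBy_conj])
      (fun p => by simp only [map_inv, MulAction.fixedBy_inv]),
    map_one, card_fixedBy_one, hom_a, hom_c_one]

theorem three_mul_card_orbits :
    3 * Nat.card (Orbits (h.hom.comp A4.cHom).range X) = Nat.card X +
      2 * Nat.card (MulAction.fixedBy X c) := by
  have hsum := card_mul_card_orbits_range (X := X) (h.hom.comp A4.cHom)
  change 3 * _ = ∑ i : Fin 3, Nat.card (MulAction.fixedBy X (c ^ i.val)) at hsum
  simp only [Fin.sum_univ_three, Fin.val_zero, Fin.val_one, Fin.val_two, pow_zero, pow_one,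
    h.pow_two_right, MulAction.fixedBy_inv, card_fixedBy_one] at hsum
  rw [hsum]
  ring

end IsTetrahedralPair

end TetrahedralPair

/-- The condition `GoodSubgroup`, for subgroups of an arbitrary group. -/
def IsGood {G : Type*} [Group G] (Δ : Subgroup G) : Prop :=
  Δ.FiniteIndex ∧ Δ.index ≤ 12 ∧
    (∃ f : Δ →* Multiplicative ℤ, Function.Surjective f) ∧
    ∃ Ω : Subgroup Δ, Ω.Normal ∧ Ω.index = 5 ∧
      ∃ g : Ω →* (Fin 5 → Multiplicative ℤ), Function.Surjective g

/-- Generators of a group that satisfy the relations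
`a² = b² = c³ = (ac)³ = (bc)³ = (ab)³ = 1`, which are those of a presentation of
`PSL(2, ℤ[ω])`. -/
structure EisensteinTriple {G : Type*} [Group G] (a b c : G) : Prop where
  left : IsTetrahedralPair a c
  right : IsTetrahedralPair b c
  mul_pow_three : (a * b) ^ 3 = 1
  closure_eq_top : Subgroup.closure {a, b, c} = ⊤

namespace EisensteinTriple

variable {G : Type*} [Group G] {a b c : G} (t : EisensteinTriple a b c)
include t

theorem conj_mul_left : a * b * a * (a * b)⁻¹ = b := by
  have hab : a * b * a * (b * a * b) = 1 := by
    rw [← t.mul_pow_three]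
    simp only [pow_succ, pow_zero, one_mul, mul_assoc]
  have ha : a⁻¹ = a := inv_eq_of_mul_eq_one_left t.left.mul_self_left
  have hb : b⁻¹ = b := inv_eq_of_mul_eq_one_left t.right.mul_self_left
  have hbraid : a * b * a = b * (a * b) := by
    rw [eq_inv_of_mul_eq_one_left hab, mul_inv_rev, mul_inv_rev, ha, hb]
  rw [hbraid, mul_inv_cancel_right]

theorem group_fg : Group.FG G :=
  Group.fg_iff.mpr ⟨{a, b, c}, t.closure_eq_top, by simp⟩

theorem range_hom_sup_range_hom : t.left.hom.range ⊔ t.right.hom.range = ⊤ := by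
  rw [eq_top_iff, ← t.closure_eq_top, Subgroup.closure_le]
  rintro x (rfl | rfl | rfl)
  · exact Subgroup.mem_sup_left ⟨A4.a, t.left.hom_a⟩
  · exact Subgroup.mem_sup_right ⟨A4.a, t.right.hom_a⟩
  · exact Subgroup.mem_sup_left ⟨.c 1, t.left.hom_c_one⟩

theorem firstBetti_add_card_add_card_le (N : Subgroup G) [N.FiniteIndex] :
    firstBetti N + Nat.card (Orbits t.left.hom.range (G ⧸ N)) +
        Nat.card (Orbits t.right.hom.range (G ⧸ N)) ≤
      Nat.card (Orbits (t.left.hom.comp A4.cHom).range (G ⧸ N)) + 1 := by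
  have := t.group_fg
  have := Subgroup.fg_of_index_ne_zero N
  have := Finite.of_surjective _ t.left.hom.rangeRestrict_surjective
  have := Finite.of_surjective _ t.right.hom.rangeRestrict_surjective
  refine GoodSubgroup.firstBetti_add_card_add_card_le t.range_hom_sup_range_hom ?_ ?_
  · rintro _ ⟨i, rfl⟩
    exact ⟨A4.cHom i, rfl⟩
  · rintro _ ⟨i, rfl⟩
    exact ⟨A4.cHom i, rfl⟩

theorem not_card_fixedBy_eq_one {X : Type*} [MulAction G X] (hc : ∀ x : X, c • x ≠ x) :
    Nat.card (MulAction.fixedBy X a) ≠ 1 := by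
  intro h
  obtain ⟨hsub, ⟨x, hx⟩⟩ := Nat.card_eq_one_iff_unique.mp h
  have hunique (y : X) (hy : a • y = y) : y = x :=
    congrArg Subtype.val (Subsingleton.elim (⟨y, hy⟩ : MulAction.fixedBy X a) ⟨x, hx⟩)
  have hcomm : Commute (c * a * c⁻¹) a := by
    have hA4 : Commute (A4.c 1 * A4.a * (A4.c 1)⁻¹) A4.a := by
      change _ * _ = _ * _
      decide +kernel
    simpa only [map_mul, map_inv, t.left.hom_a, t.left.hom_c_one] using hA4.map t.left.hom
  have hconj : (c * a * c⁻¹) • x = x :=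
    hunique _ (by rw [smul_smul, ← hcomm.eq, ← smul_smul, hx])
  have hfix : a • c⁻¹ • x = c⁻¹ • x := by
    rwa [mul_smul, mul_smul, smul_eq_iff_eq_inv_smul] at hconj
  exact hc x (eq_inv_smul_iff.mp (hunique _ hfix).symm)

end EisensteinTriple

section Index

variable {G : Type*} [Group G] {a b c : G} {Δ : Subgroup G}

theorem IsGood.exists_le (h : IsGood Δ) : ∃ N ≤ Δ, (N.subgroupOf Δ).Normal ∧ N.relIndex Δ = 5 ∧
    ∃ g : N →* (Fin 5 → Multiplicative ℤ), Function.Surjective g := by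
  obtain ⟨-, -, -, Ω, hnormal, hindex, g, hg⟩ := h
  have hsub : (Ω.map Δ.subtype).subgroupOf Δ = Ω :=
    Subgroup.comap_map_eq_self_of_injective Δ.subtype_injective Ω
  let e := Ω.equivMapOfInjective Δ.subtype Δ.subtype_injective
  exact ⟨Ω.map Δ.subtype, Subgroup.map_subtype_le Ω, hsub.symm ▸ hnormal,
    by rw [Subgroup.relIndex, hsub, hindex], g.comp e.symm, hg.comp e.symm.surjective⟩

theorem eq_twelve_or_of_card_bounds {n α τ q : ℕ} (hq : 12 * q = n + 3 * α + 8 * τ)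
    (hbound : 24 + 15 * α + 20 * τ ≤ 5 * n) (hn : n ≤ 12) :
    n = 12 ∧ α = 0 ∧ τ = 0 ∨ α = 1 ∧ τ = 0 := by
  have hα : α ≤ 2 := by omega
  interval_cases α <;> omega

theorem IsGood.card_fixedBy (h : IsGood Δ) (t : EisensteinTriple a b c) : Δ.index = 12 ∧
    Nat.card (MulAction.fixedBy (G ⧸ Δ) a) = 0 ∧ Nat.card (MulAction.fixedBy (G ⧸ Δ) c) = 0 := by
  obtain ⟨N, hN, hnormal, hrel, g, hg⟩ := h.exists_le
  obtain ⟨hfin, hle, -⟩ := h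
  have hindex : Nat.card (G ⧸ N) = 5 * Δ.index := by
    rw [← hrel]
    exact (Subgroup.relIndex_mul_index hN).symm
  have hpos : Δ.index ≠ 0 := hfin.index_ne_zero
  have : N.FiniteIndex := ⟨by rw [Subgroup.index, hindex]; omega⟩
  have hbetti : 5 ≤ firstBetti N := by
    have := t.group_fg
    have := Subgroup.fg_of_index_ne_zero N
    simpa using card_le_firstBetti hg
  have hb : Nat.card (MulAction.fixedBy (G ⧸ Δ) b) = Nat.card (MulAction.fixedBy (G ⧸ Δ) a) := by
    rw [← card_fixedBy_conj (a * b) a, t.conj_mul_left]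
  have hcover {k : ℕ} {x : G} (hx : x ^ k = 1) (hk : k.Coprime 5) :
      Nat.card (MulAction.fixedBy (G ⧸ N) x) = 5 * Nat.card (MulAction.fixedBy (G ⧸ Δ) x) := by
    rw [← hrel] at hk ⊢
    exact card_fixedBy_quotient_of_coprime hN hx hk
  have hNa := hcover (k := 2) ((sq a).trans t.left.mul_self_left) (by norm_num)
  have hNb := hcover (k := 2) ((sq b).trans t.right.mul_self_left) (by norm_num)
  have hNc := hcover t.left.pow_three_right (by norm_num)
  have hrank := t.firstBetti_add_card_add_card_le N
  have hNA := t.left.twelve_mul_card_orbits (X := G ⧸ N)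
  have hNB := t.right.twelve_mul_card_orbits (X := G ⧸ N)
  have hNC := t.left.three_mul_card_orbits (X := G ⧸ N)
  have hA := t.left.twelve_mul_card_orbits (X := G ⧸ Δ)
  rw [← Subgroup.index] at hA
  have hbound : 24 + 15 * Nat.card (MulAction.fixedBy (G ⧸ Δ) a) +
      20 * Nat.card (MulAction.fixedBy (G ⧸ Δ) c) ≤ 5 * Δ.index := by
    omega
  have hcases := eq_twelve_or_of_card_bounds hA hbound hle
  refine hcases.resolve_right fun ⟨hone, hzero⟩ => ?_
  exact t.not_card_fixedBy_eq_one
    (fun x hx => (Finite.card_eq_zero_iff.mp hzero).false ⟨x, hx⟩) hone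

end Index

section Gluing

namespace A4

/-- A transitive action of a group with generators as in `EisensteinTriple` on twelve points,
without fixed points of `a`, `b` and `c`, is glued from the regular actions of the two tetrahedral
subgroups `⟨a, c⟩` and `⟨b, c⟩`. The gluing is determined by the points `b * c ^ j • x` for a base
point `x`. If `α j • x` are these points, then `p • x` for `p` in `⟨b, c⟩` is `glue α p • x`, with
`glue α p` in `⟨a, c⟩`. -/
def glue (α : Fin 3 → A4) : A4 → A4
  | .c i => .c i
  | .cac i j => .c i * α j

/-- In the action glued along `α`, the involution `b` maps the point with label `p` to the point
with label `q`. -/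
def Glues (α : Fin 3 → A4) (p q : A4) : Prop :=
  ∃ r, glue α r = p ∧ glue α (a * r) = q

instance (α : Fin 3 → A4) (p q : A4) : Decidable (Glues α p q) := by
  unfold Glues
  infer_instance

/-- In the action glued along `α`, the element `a * b` has order dividing three. -/
def HasOrderThree (α : Fin 3 → A4) : Prop :=
  ∀ p q, glue α q = a * glue α (a * p) →
    ∀ r, glue α r = a * glue α (a * q) → glue α p = a * glue α (a * r)

instance : DecidablePred HasOrderThree := fun α => by
  unfold HasOrderThree
  infer_instance

/-- The action glued along `α` is also glued along `α'`, with the base point of label `p`. -/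
def IsRebasing (α α' : Fin 3 → A4) (p : A4) : Prop :=
  ∀ j, Glues α (.c j * p) (α' j * p)

instance (α α' : Fin 3 → A4) (p : A4) : Decidable (IsRebasing α α' p) := by
  unfold IsRebasing
  infer_instance

/-- The gluing of the action on the cosets of the figure-eight knot group. -/
def figureEight : Fin 3 → A4 :=
  ![.cac 1 1, .cac 1 2, .cac 2 0]

/-- The gluing of the action on the cosets of the group of the sister of the figure-eight knot
complement. -/
def sister : Fin 3 → A4 :=
  ![.cac 1 0, .cac 0 2, .cac 1 1]

/-- The gluings for which the point stabilizers have finite abelianization. -/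
def torsion (i : Fin 3) : Fin 3 → A4 :=
  ![.cac 0 0, .cac 0 1, .cac i 2]

set_option maxRecDepth 10000 in
theorem exists_isRebasing : ∀ x y z, Function.Injective (glue ![x, y, z]) →
    HasOrderThree ![x, y, z] → ∃ p, (∃ i, IsRebasing ![x, y, z] (torsion i) p) ∨
      IsRebasing ![x, y, z] figureEight p ∨ IsRebasing ![x, y, z] sister p := by
  decide +kernel

end A4

variable {G : Type*} [Group G] {a b c : G} {X : Type*} [MulAction G X]

theorem IsTetrahedralPair.hom_smul_injective (h : IsTetrahedralPair a c) (ha : ∀ x : X, a • x ≠ x)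
    (hc : ∀ x : X, c • x ≠ x) (x : X) : Function.Injective fun p => h.hom p • x := by
  have hconj (q r : A4) (hr : ∀ y : X, h.hom r • y ≠ y) : h.hom (q * r * q⁻¹) • x ≠ x := by
    rw [map_mul, map_mul, mul_smul, mul_smul, Ne, smul_eq_iff_eq_inv_smul, ← map_inv]
    exact hr _
  have hfree (p : A4) (hp : h.hom p • x = x) : p = 1 := by
    obtain rfl | ⟨-, -, q, rfl⟩ | ⟨-, -, q, rfl | rfl⟩ := A4.eq_one_or_isConj p
    · rfl
    · exact absurd hp (hconj q _ (by rwa [h.hom_a]))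
    · exact absurd hp (hconj q _ (by rwa [h.hom_c_one]))
    · refine absurd hp (hconj q _ fun y => ?_)
      rw [map_inv, h.hom_c_one, Ne, inv_smul_eq_iff]
      exact (hc y).symm
  intro p q hpq
  refine inv_mul_eq_one.mp (hfree _ ?_)
  rw [map_mul, map_inv, mul_smul, inv_smul_eq_iff]
  exact hpq.symm

namespace EisensteinTriple

variable (t : EisensteinTriple a b c)

/-- The action is glued along `α`, with base point `x`. -/
def IsGluing (α : Fin 3 → A4) (x : X) : Prop :=
  ∀ j : Fin 3, b • c ^ j.val • x = t.left.hom (α j) • x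

namespace IsGluing

variable {t} {α : Fin 3 → A4} {x : X} (h : t.IsGluing α x)
include h

theorem left_glue_smul (p : A4) : t.left.hom (A4.glue α p) • x = t.right.hom p • x := by
  rcases p with i | ⟨i, j⟩
  · rfl
  · rw [A4.glue, map_mul, mul_smul, ← h j, t.left.hom_c, t.right.hom_cac, mul_smul, mul_smul]

theorem smul_left_glue_smul (p : A4) :
    b • t.left.hom (A4.glue α p) • x = t.left.hom (A4.glue α (A4.a * p)) • x := by
  rw [h.left_glue_smul, h.left_glue_smul, map_mul, t.right.hom_a, mul_smul]

theorem smul_left_smul_of_glues {p q : A4} (hpq : A4.Glues α p q) :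
    b • t.left.hom p • x = t.left.hom q • x := by
  obtain ⟨r, rfl, rfl⟩ := hpq
  exact h.smul_left_glue_smul r

theorem glue_injective (hinj : Function.Injective fun p => t.right.hom p • x) :
    Function.Injective (A4.glue α) := by
  intro p q hpq
  refine hinj ?_
  simp only [← h.left_glue_smul, hpq]

theorem hasOrderThree (hinj : Function.Injective fun p => t.left.hom p • x) :
    A4.HasOrderThree α := by
  have hstep {p q : A4} (hq : A4.glue α q = A4.a * A4.glue α (A4.a * p)) :
      t.left.hom (A4.glue α q) • x = (a * b) • t.left.hom (A4.glue α p) • x := by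
    rw [hq, map_mul, t.left.hom_a, mul_smul, mul_smul, h.smul_left_glue_smul]
  intro p q hq r hr
  refine hinj ?_
  calc t.left.hom (A4.glue α p) • x = ((a * b) ^ 3) • t.left.hom (A4.glue α p) • x := by
        rw [t.mul_pow_three, one_smul]
    _ = (a * b) • t.left.hom (A4.glue α r) • x := by
        simp only [hstep hr, hstep hq, pow_succ, pow_zero, one_mul, mul_smul]
    _ = t.left.hom (A4.a * A4.glue α (A4.a * r)) • x := by
        rw [map_mul, t.left.hom_a, mul_smul, mul_smul, h.smul_left_glue_smul]

theorem rebase {α' : Fin 3 → A4} {p : A4} (hp : A4.IsRebasing α α' p) :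
    t.IsGluing α' (t.left.hom p • x) := by
  intro j
  rw [← t.left.hom_c, ← mul_smul (t.left.hom _), ← map_mul, h.smul_left_smul_of_glues (hp j),
    map_mul, mul_smul]

end IsGluing

theorem exists_isGluing (hcard : Nat.card X = 12) (ha : ∀ x : X, a • x ≠ x)
    (hb : ∀ x : X, b • x ≠ x) (hc : ∀ x : X, c • x ≠ x) :
    ∃ x : X, (∃ i, t.IsGluing (A4.torsion i) x) ∨ t.IsGluing A4.figureEight x ∨
      t.IsGluing A4.sister x := by
  obtain ⟨hX, hfin⟩ := Nat.card_pos_iff.mp (by rw [hcard]; norm_num : 0 < Nat.card X)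
  obtain ⟨x⟩ := hX
  have hinj := t.left.hom_smul_injective ha hc x
  have hbij := hinj.bijective_of_nat_card_le (by rw [hcard, Nat.card_eq_fintype_card]; rfl)
  choose α hα using fun j : Fin 3 => hbij.surjective (b • c ^ j.val • x)
  have h : t.IsGluing α x := fun j => (hα j).symm
  rw [← FinVec.etaExpand_eq α] at h
  obtain ⟨p, hp⟩ := A4.exists_isRebasing _ _ _
    (h.glue_injective (t.right.hom_smul_injective hb hc x)) (h.hasOrderThree hinj)
  exact ⟨t.left.hom p • x, hp.imp (fun ⟨i, hi⟩ => ⟨i, h.rebase hi⟩) (.imp h.rebase h.rebase)⟩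

end EisensteinTriple

end Gluing

section Schreier

/-- The Schreier generator by which the elements `p` of `⟨b, c⟩` and `glue α p` of `⟨a, c⟩`
differ, where `X j` is the generator that belongs to `b * c ^ j`. -/
def A4.label {D : Type*} [Group D] (X : Fin 3 → D) : A4 → D
  | .c _ => 1
  | .cac _ j => X j

/-- In the action glued along `α`, the Schreier generator that belongs to `b * c ^ j` maps the
point with label `q` to the point with label `s`. -/
def A4.Moves (α : Fin 3 → A4) (j : Fin 3) (q s : A4) : Prop :=
  A4.Glues α (.c j * q) (α j * s)

instance (α : Fin 3 → A4) (j : Fin 3) (q s : A4) : Decidable (A4.Moves α j q s) := by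
  unfold A4.Moves
  infer_instance

namespace EisensteinTriple

variable {G : Type*} [Group G] {a b c : G} (t : EisensteinTriple a b c) (α : Fin 3 → A4)

/-- The Schreier generators of the stabilizer of a point `x`, for the transversal `⟨a, c⟩`, when
`α` describes the gluing of the orbit of `x`. -/
def schreierGen (j : Fin 3) : G :=
  (t.left.hom (α j))⁻¹ * (b * c ^ j.val)

theorem left_glue_mul_label (p : A4) :
    t.left.hom (A4.glue α p) * A4.label (t.schreierGen α) p = t.right.hom p := by
  rcases p with i | ⟨i, j⟩
  · exact mul_one _
  · rw [A4.glue, A4.label, schreierGen, map_mul, t.left.hom_c, t.right.hom_cac]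
    group

theorem right_mul_left_glue (q p : A4) : t.right.hom q * t.left.hom (A4.glue α p) =
    t.left.hom (A4.glue α (q * p)) *
      (A4.label (t.schreierGen α) (q * p) * (A4.label (t.schreierGen α) p)⁻¹) := by
  rw [← mul_assoc, eq_mul_inv_iff_mul_eq, mul_assoc, left_glue_mul_label, left_glue_mul_label,
    map_mul]

theorem label_schreierGen_relator {p q r : A4} (hq : A4.glue α q = A4.a * A4.glue α (A4.a * p))
    (hr : A4.glue α r = A4.a * A4.glue α (A4.a * q))
    (hp : A4.glue α p = A4.a * A4.glue α (A4.a * r)) :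
    A4.label (t.schreierGen α) (A4.a * r) * (A4.label (t.schreierGen α) r)⁻¹ *
      (A4.label (t.schreierGen α) (A4.a * q) * (A4.label (t.schreierGen α) q)⁻¹) *
      (A4.label (t.schreierGen α) (A4.a * p) * (A4.label (t.schreierGen α) p)⁻¹) = 1 := by
  have hstep {p q : A4} (h : A4.glue α q = A4.a * A4.glue α (A4.a * p)) (g : G) :
      a * (b * (t.left.hom (A4.glue α p) * g)) = t.left.hom (A4.glue α q) *
        (A4.label (t.schreierGen α) (A4.a * p) * (A4.label (t.schreierGen α) p)⁻¹ * g) := by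
    have hb := t.right_mul_left_glue α A4.a p
    rw [t.right.hom_a] at hb
    rw [← mul_assoc b, hb, h, map_mul, t.left.hom_a]
    simp only [mul_assoc]
  have hcube : a * (b * (a * (b * (a * (b * (t.left.hom (A4.glue α p) * 1)))))) =
      t.left.hom (A4.glue α p) * 1 := by
    simpa only [pow_succ, pow_zero, one_mul, mul_assoc] using
      congrArg (· * (t.left.hom (A4.glue α p) * 1)) t.mul_pow_three
  rw [hstep hq, hstep hr, hstep hp] at hcube
  simpa only [mul_one, mul_assoc] using mul_left_cancel hcube

theorem exists_eq_left_mul_of_glue_surjective (hα : Function.Surjective (A4.glue α)) (g : G) :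
    ∃ p, ∃ d ∈ Subgroup.closure (Set.range (t.schreierGen α)), g = t.left.hom p * d := by
  set D := Subgroup.closure (Set.range (t.schreierGen α))
  have hlabel (p : A4) : A4.label (t.schreierGen α) p ∈ D := by
    rcases p with _ | ⟨_, j⟩
    · exact D.one_mem
    · exact Subgroup.subset_closure ⟨j, rfl⟩
  let S : Set G := {g | ∃ p, ∃ d ∈ D, g = t.left.hom p * d}
  have hleft (q : A4) : ∀ g ∈ S, t.left.hom q * g ∈ S := by
    rintro _ ⟨p, d, hd, rfl⟩
    exact ⟨q * p, d, hd, by rw [map_mul, mul_assoc]⟩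
  have hright (q : A4) : ∀ g ∈ S, t.right.hom q * g ∈ S := by
    rintro _ ⟨p, d, hd, rfl⟩
    obtain ⟨p, rfl⟩ := hα p
    rw [← mul_assoc, t.right_mul_left_glue, mul_assoc]
    exact ⟨_, _, D.mul_mem (D.mul_mem (hlabel _) (D.inv_mem (hlabel _))) hd, rfl⟩
  have hg : g ∈ Subgroup.closure (t.left.hom.range ∪ t.right.hom.range : Set G) := by
    rw [← Subgroup.sup_eq_closure, t.range_hom_sup_range_hom]
    exact Subgroup.mem_top g
  change g ∈ S
  induction hg using Subgroup.closure_induction_left with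
  | one => exact ⟨1, 1, D.one_mem, by simp⟩
  | mul_left x hx y _ hy =>
    obtain ⟨q, rfl⟩ | ⟨q, rfl⟩ := hx
    · exact hleft q y hy
    · exact hright q y hy
  | inv_mul_cancel x hx y _ hy =>
    obtain ⟨q, rfl⟩ | ⟨q, rfl⟩ := hx
    · exact map_inv t.left.hom q ▸ hleft q⁻¹ y hy
    · exact map_inv t.right.hom q ▸ hright q⁻¹ y hy

section

variable {t α} {X : Type*} [MulAction G X] {x : X} (h : t.IsGluing α x)
include h

theorem IsGluing.schreierGen_mem (j : Fin 3) : t.schreierGen α j ∈ MulAction.stabilizer G x := by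
  rw [MulAction.mem_stabilizer_iff, schreierGen, mul_smul, mul_smul, h j, inv_smul_smul]

theorem IsGluing.stabilizer_eq_closure (hinj : Function.Injective fun p => t.left.hom p • x)
    (hα : Function.Surjective (A4.glue α)) :
    MulAction.stabilizer G x = Subgroup.closure (Set.range (t.schreierGen α)) := by
  have hle : Subgroup.closure (Set.range (t.schreierGen α)) ≤ MulAction.stabilizer G x := by
    rw [Subgroup.closure_le]
    rintro _ ⟨j, rfl⟩
    exact h.schreierGen_mem j
  refine le_antisymm (fun g hg => ?_) hle
  obtain ⟨p, d, hd, rfl⟩ := t.exists_eq_left_mul_of_glue_surjective α hα g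
  have hp : t.left.hom p • x = t.left.hom 1 • x := by
    rw [MulAction.mem_stabilizer_iff, mul_smul, MulAction.mem_stabilizer_iff.mp (hle hd)] at hg
    rw [hg, map_one, one_smul]
  rwa [hinj hp, map_one, one_mul]

theorem IsGluing.schreierGen_smul_of_moves {j : Fin 3} {q s : A4} (hqs : A4.Moves α j q s) :
    t.schreierGen α j • t.left.hom q • x = t.left.hom s • x := by
  rw [schreierGen, mul_smul, mul_smul, ← t.left.hom_c, ← mul_smul (t.left.hom _), ← map_mul,
    h.smul_left_smul_of_glues hqs, map_mul, mul_smul, inv_smul_smul]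

end

end EisensteinTriple

end Schreier

section FreeByCyclic

theorem eq_zero_of_recurrence_of_periodic {s : ℤ → ℚ} {k : ℕ} (hk : k ≠ 0)
    (hs : ∀ n, s (n + 1) = 3 * s n - s (n - 1)) (hper : ∀ n, s (n + k) = s n) : s = 0 := by
  have hmod (n : ℤ) : s n = s (n % k) := by
    have := Function.Periodic.int_mul hper (n / k) (n % k)
    rwa [mul_comm, Int.cast_id, Int.emod_add_mul_ediv] at this
  obtain ⟨m, hm⟩ : ∃ m, ∀ n, |s n| ≤ |s m| := by
    obtain ⟨m, -, hm⟩ := Finset.exists_max_image (Finset.Ico 0 (k : ℤ)) (fun n => |s n|)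
      ⟨0, by simp; omega⟩
    refine ⟨m, fun n => ?_⟩
    rw [hmod n]
    exact hm _ (Finset.mem_Ico.mpr ⟨Int.emod_nonneg n (by omega), Int.emod_lt_of_pos n (by omega)⟩)
  have hzero : |s m| = 0 := by
    have habs : |3 * s m| ≤ |s (m + 1)| + |s (m - 1)| := by
      rw [show 3 * s m = s (m + 1) + s (m - 1) by rw [hs m]; ring]
      exact abs_add_le _ _
    rw [abs_mul, abs_of_pos three_pos] at habs
    linarith [hm (m + 1), hm (m - 1), abs_nonneg (s m)]
  exact funext fun n => abs_nonpos_iff.mp (hzero ▸ hm n)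

variable {D : Type*} [Group D] {t u : D} {Ω : Subgroup D} [Ω.Normal]

/-- In the group of the figure-eight knot, with `t` a meridian and `u` in the commutator subgroup,
the relation makes the numbers `χ (t ^ n * u * t ^ (-n))` satisfy a linear recurrence with
characteristic polynomial the Alexander polynomial `X ^ 2 - 3 * X + 1`. -/
theorem character_conj_eq_zero [Ω.FiniteIndex]
    (hrel : t * u * t⁻¹ = u * (t⁻¹ * u⁻¹ * t) * u * u) (χ : Additive Ω →+ ℚ) (w : Ω)
    (hw : (w : D) = u) (d : D) : χ (.ofMul (MulAut.conjNormal d w)) = 0 := by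
  let s (n : ℤ) : ℚ := χ (.ofMul (MulAut.conjNormal (d * t ^ n) w))
  have hw_rel : MulAut.conjNormal t w = w * (MulAut.conjNormal t⁻¹ w)⁻¹ * w * w :=
    Subtype.ext (by simpa [hw, mul_assoc] using hrel)
  have hs (n : ℤ) : s (n + 1) = 3 * s n - s (n - 1) := by
    have hconj : MulAut.conjNormal (d * t ^ (n + 1)) w =
        MulAut.conjNormal (d * t ^ n) w * (MulAut.conjNormal (d * t ^ (n - 1)) w)⁻¹ *
          MulAut.conjNormal (d * t ^ n) w * MulAut.conjNormal (d * t ^ n) w := by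
      rw [zpow_add_one, zpow_sub_one, ← mul_assoc, ← mul_assoc, map_mul _ _ t, map_mul _ _ t⁻¹,
        MulAut.mul_apply, MulAut.mul_apply, hw_rel]
      simp only [map_mul _ _ (_ : Ω), map_inv (MulAut.conjNormal (d * t ^ n))]
    simp only [s, hconj, ofMul_mul, ofMul_inv, map_add, map_neg]
    ring
  have hper (n : ℤ) : s (n + Ω.index) = s n := by
    have hmem : d * t ^ Ω.index * d⁻¹ ∈ Ω :=
      ‹Ω.Normal›.conj_mem _ (Ω.pow_index_mem t) d
    have hconj : MulAut.conjNormal (d * t ^ (n + Ω.index)) w = ⟨_, hmem⟩ *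
        MulAut.conjNormal (d * t ^ n) w * (⟨_, hmem⟩ : Ω)⁻¹ := by
      refine Subtype.ext ?_
      simp only [MulAut.conjNormal_apply, Subgroup.coe_mul, Subgroup.coe_inv, add_comm n, zpow_add,
        zpow_natCast]
      group
    simp only [s, hconj, ofMul_mul, ofMul_inv, map_add, map_neg]
    ring
  have hzero := eq_zero_of_recurrence_of_periodic Ω.index_ne_zero_of_finite hs hper
  simpa [s] using congrFun hzero 0

theorem character_eq_zero_of_mem_normalClosure [Ω.FiniteIndex]
    (hrel : t * u * t⁻¹ = u * (t⁻¹ * u⁻¹ * t) * u * u) (hu : u ∈ Ω) (χ : Additive Ω →+ ℚ) (g : Ω)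
    (hg : (g : D) ∈ Subgroup.normalClosure {u}) : χ (.ofMul g) = 0 := by
  have hle : Subgroup.normalClosure {u} ≤
      (AddMonoidHom.toMultiplicativeRight χ).ker.map Ω.subtype := by
    rw [Subgroup.normalClosure, Subgroup.closure_le]
    intro v hv
    obtain ⟨_, rfl, hconj⟩ := Group.mem_conjugatesOfSet_iff.mp hv
    obtain ⟨d, rfl⟩ := isConj_iff.mp hconj
    exact ⟨MulAut.conjNormal d ⟨_, hu⟩, character_conj_eq_zero hrel χ _ rfl d, rfl⟩
  obtain ⟨g', hg', h⟩ := hle hg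
  rw [← Subtype.ext h]
  exact hg'

theorem firstBetti_le_one [Ω.FiniteIndex] (hgen : Subgroup.closure {t, u} = ⊤)
    (hrel : t * u * t⁻¹ = u * (t⁻¹ * u⁻¹ * t) * u * u) (hu : u ∈ Ω) : firstBetti Ω ≤ 1 := by
  have hM : Subgroup.normalClosure {u} ≤ Ω := Subgroup.normalClosure_le_normal (by simpa using hu)
  let τ : Ω := ⟨t ^ Ω.index, Ω.pow_index_mem t⟩
  let eval : (Additive Ω →+ ℚ) →ₗ[ℚ] ℚ :=
    { toFun := fun χ => χ (.ofMul τ), map_add' := fun _ _ => rfl, map_smul' := fun _ _ => rfl }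
  suffices Function.Injective eval by
    simpa [firstBetti] using LinearMap.finrank_le_finrank_of_injective this
  refine (injective_iff_map_eq_zero eval).mpr fun χ hχ => AddMonoidHom.ext fun g => ?_
  have htop : Subgroup.normalClosure {u} ⊔ Subgroup.zpowers t = ⊤ := by
    rw [eq_top_iff, ← hgen, Subgroup.closure_le]
    rintro v (rfl | rfl)
    · exact Subgroup.mem_sup_right (Subgroup.mem_zpowers _)
    · exact Subgroup.mem_sup_left (Subgroup.subset_normalClosure rfl)
  obtain ⟨m, hm, _, ⟨n, rfl⟩, hg⟩ :=
    Subgroup.mem_sup_of_normal_left.mp (htop ▸ Subgroup.mem_top (g.toMul : D))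
  have htn : t ^ n ∈ Ω := (Subgroup.mul_mem_cancel_left _ (hM hm)).mp (hg ▸ g.toMul.2)
  have hg' : g = .ofMul ⟨m, hM hm⟩ + .ofMul ⟨t ^ n, htn⟩ :=
    congrArg Additive.ofMul (Subtype.ext hg.symm)
  have hτ : Ω.index • Additive.ofMul (⟨t ^ n, htn⟩ : Ω) = n • .ofMul τ :=
    congrArg Additive.ofMul (Subtype.ext (by
      simp [τ, ← zpow_natCast, ← zpow_mul, mul_comm]))
  have hχτ : Ω.index • χ (.ofMul ⟨t ^ n, htn⟩) = 0 := by
    rw [← map_nsmul, hτ, map_zsmul, show χ (.ofMul τ) = 0 from hχ, smul_zero]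
  rw [hg', map_add, character_eq_zero_of_mem_normalClosure hrel hu χ ⟨m, hM hm⟩ hm, zero_add]
  exact (smul_eq_zero.mp hχτ).resolve_left Ω.index_ne_zero_of_finite

end FreeByCyclic

section CommGroup

theorem nonempty_mulEquiv_int_prod_zmod {A : Type*} [CommGroup A] {y z : A}
    (hy : ¬IsOfFinOrder y) (hz : IsOfFinOrder z) (hgen : Subgroup.closure {y, z} = ⊤) :
    Nonempty (A ≃* Multiplicative ℤ × Multiplicative (ZMod (orderOf z))) := by
  have hdisj : Disjoint (Subgroup.zpowers y) (Subgroup.zpowers z) := by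
    rw [Subgroup.disjoint_def]
    rintro _ ⟨m, rfl⟩ hm
    by_contra hm1
    obtain ⟨n, hn, hmn⟩ := isOfFinOrder_iff_zpow_eq_one.mp (hz.of_mem_zpowers hm)
    refine hy (isOfFinOrder_iff_zpow_eq_one.mpr ⟨m * n, mul_ne_zero ?_ hn, by rwa [zpow_mul]⟩)
    rintro rfl
    exact hm1 (zpow_zero y)
  have htop : Subgroup.zpowers y ⊔ Subgroup.zpowers z = ⊤ := by
    rw [← hgen, ← Set.singleton_union, Subgroup.closure_union, Subgroup.zpowers_eq_closure,
      Subgroup.zpowers_eq_closure]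
  let e : Subgroup.zpowers y × Subgroup.zpowers z ≃* A :=
    MulEquiv.ofBijective ((Subgroup.zpowers y).subtype.coprod (Subgroup.zpowers z).subtype)
      ⟨Subgroup.mul_injective_of_disjoint hdisj, by
        intro v
        obtain ⟨p, hp, q, hq, rfl⟩ := Subgroup.mem_sup.mp (htop ▸ Subgroup.mem_top v)
        exact ⟨(⟨p, hp⟩, ⟨q, hq⟩), rfl⟩⟩
  have : Infinite (Subgroup.zpowers y) := (infinite_zpowers.mpr hy).to_subtype
  have eZ := zmodCyclicMulEquiv (inferInstance : IsCyclic (Subgroup.zpowers z))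
  rw [Nat.card_zpowers] at eZ
  exact ⟨e.symm.trans (intCyclicMulEquiv.symm.prodCongr eZ.symm)⟩

end CommGroup

section SchreierSystem

/-- Generators `X j` of a group, indexed like the Schreier generators for the gluing `α`, that
satisfy the relations which `(a * b) ^ 3 = 1` imposes on these. -/
structure IsSchreierSystem {D : Type*} [Group D] (α : Fin 3 → A4) (X : Fin 3 → D) : Prop where
  closure_eq_top : Subgroup.closure (Set.range X) = ⊤
  relator {p q r : A4} : A4.glue α q = A4.a * A4.glue α (A4.a * p) →
    A4.glue α r = A4.a * A4.glue α (A4.a * q) → A4.glue α p = A4.a * A4.glue α (A4.a * r) →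
    A4.label X (A4.a * r) * (A4.label X r)⁻¹ * (A4.label X (A4.a * q) * (A4.label X q)⁻¹) *
      (A4.label X (A4.a * p) * (A4.label X p)⁻¹) = 1

namespace IsSchreierSystem

variable {D : Type*} [Group D] {α : Fin 3 → A4} {X : Fin 3 → D}

theorem eq_top_of_forall_mem (h : IsSchreierSystem α X) {K : Subgroup D} (hK : ∀ j, X j ∈ K) :
    K = ⊤ := by
  rw [eq_top_iff, ← h.closure_eq_top, Subgroup.closure_le]
  rintro _ ⟨j, rfl⟩
  exact hK j

theorem character_eq_zero (h : IsSchreierSystem α X) {χ : Additive D →+ ℚ}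
    (hχ : ∀ j, χ (.ofMul (X j)) = 0) : χ = 0 := by
  have hker : (AddMonoidHom.toMultiplicativeRight χ).ker = ⊤ := h.eq_top_of_forall_mem hχ
  exact AddMonoidHom.ext fun d => MonoidHom.mem_ker.mp (hker ▸ Subgroup.mem_top d.toMul)

theorem character_eq_zero_of_torsion {i : Fin 3} (h : IsSchreierSystem (A4.torsion i) X)
    (χ : Additive D →+ ℚ) : χ = 0 := by
  have hmap {d₁ d₂ d₃ e₁ e₂ e₃ : D} (hd : d₁ * e₁⁻¹ * (d₂ * e₂⁻¹) * (d₃ * e₃⁻¹) = 1) :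
      χ (.ofMul d₁) + χ (.ofMul d₂) + χ (.ofMul d₃) =
        χ (.ofMul e₁) + χ (.ofMul e₂) + χ (.ofMul e₃) := by
    have := congrArg (fun d => χ (.ofMul d)) hd
    simp only [ofMul_mul, ofMul_inv, ofMul_one, map_add, map_neg, map_zero] at this
    linarith
  have hone : χ (.ofMul 1) = 0 := map_zero χ
  have hχ₀ : χ (.ofMul (X 0)) = 0 := by
    have : X 0 * 1⁻¹ * (X 0 * 1⁻¹) * (X 0 * 1⁻¹) = 1 :=
      h.relator (p := .c 0) (q := .c 0) (r := .c 0) rfl rfl rfl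
    linarith [hmap this]
  have hχ₁ : χ (.ofMul (X 1)) = 0 := by
    have : X 1 * 1⁻¹ * (X 1 * 1⁻¹) * (X 1 * 1⁻¹) = 1 :=
      h.relator (p := .c 1) (q := .c 1) (r := .c 1) rfl rfl rfl
    linarith [hmap this]
  have hχ₂ : χ (.ofMul (X 2)) = 0 := by
    obtain rfl | rfl | rfl : i = 0 ∨ i = 1 ∨ i = 2 := by lia
    · have : X 2 * 1⁻¹ * (X 2 * 1⁻¹) * (X 2 * 1⁻¹) = 1 :=
        h.relator (p := .c 2) (q := .c 2) (r := .c 2) rfl rfl rfl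
      linarith [hmap this]
    · have : X 2 * 1⁻¹ * (X 2 * (X 0)⁻¹) * (X 2 * (X 1)⁻¹) = 1 :=
        h.relator (p := .cac 2 1) (q := .cac 1 0) (r := .c 2) rfl rfl rfl
      linarith [hmap this]
    · have : X 2 * 1⁻¹ * (X 2 * (X 1)⁻¹) * (X 2 * (X 0)⁻¹) = 1 :=
        h.relator (p := .cac 1 0) (q := .cac 2 1) (r := .c 2) rfl rfl rfl
      linarith [hmap this]
  exact h.character_eq_zero (Fin.forall_fin_succ.mpr ⟨hχ₀, Fin.forall_fin_two.mpr ⟨hχ₁, hχ₂⟩⟩)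

section FigureEight

variable (h : IsSchreierSystem A4.figureEight X)
include h

theorem figureEight_apply_two : X 2 = X 1 * (X 0)⁻¹ * (X 1)⁻¹ * X 0 := by
  have hrel : X 0 * (X 2)⁻¹ * (X 1 * (X 0)⁻¹) * (1 * (X 1)⁻¹) = 1 :=
    h.relator (p := .cac 0 1) (q := .cac 2 0) (r := .cac 2 2) rfl rfl rfl
  calc X 2 = X 1 * (X 0)⁻¹ * (X 1)⁻¹ *
        (X 0 * (X 2)⁻¹ * (X 1 * (X 0)⁻¹) * (1 * (X 1)⁻¹))⁻¹ * X 0 := by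
        group
    _ = X 1 * (X 0)⁻¹ * (X 1)⁻¹ * X 0 := by rw [hrel, inv_one, mul_one]

theorem figureEight_relation : X 1 * (X 0 * (X 1)⁻¹) * (X 1)⁻¹ =
    X 0 * (X 1)⁻¹ * ((X 1)⁻¹ * (X 0 * (X 1)⁻¹)⁻¹ * X 1) * (X 0 * (X 1)⁻¹) * (X 0 * (X 1)⁻¹) := by
  have hrel : X 2 * (X 1)⁻¹ * (1 * (X 2)⁻¹) * (X 0 * 1⁻¹) = 1 :=
    h.relator (p := .c 0) (q := .cac 0 2) (r := .cac 2 1) rfl rfl rfl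
  rw [h.figureEight_apply_two] at hrel
  refine (mul_inv_eq_one.mp ?_).symm
  calc _ = X 1 * X 0 * (X 1)⁻¹ * (X 1 * (X 0)⁻¹ * (X 1)⁻¹ * X 0 * (X 1)⁻¹ *
        (1 * (X 1 * (X 0)⁻¹ * (X 1)⁻¹ * X 0)⁻¹) * (X 0 * 1⁻¹)) * (X 1 * X 0 * (X 1)⁻¹)⁻¹ := by
        group
    _ = 1 := by rw [hrel, mul_one, mul_inv_cancel]

theorem figureEight_closure_eq_top : Subgroup.closure {X 1, X 0 * (X 1)⁻¹} = ⊤ := by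
  have h₁ : X 1 ∈ Subgroup.closure {X 1, X 0 * (X 1)⁻¹} := Subgroup.subset_closure (by simp)
  have h₀ : X 0 ∈ Subgroup.closure {X 1, X 0 * (X 1)⁻¹} :=
    (Subgroup.mul_mem_cancel_right _ (Subgroup.inv_mem _ h₁)).mp
      (Subgroup.subset_closure (by simp))
  have h₂ : X 2 ∈ Subgroup.closure {X 1, X 0 * (X 1)⁻¹} := by
    rw [h.figureEight_apply_two]
    exact mul_mem (mul_mem (mul_mem h₁ (inv_mem h₀)) (inv_mem h₁)) h₀
  exact h.eq_top_of_forall_mem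
    (Fin.forall_fin_succ.mpr ⟨h₀, Fin.forall_fin_two.mpr ⟨h₁, h₂⟩⟩)

theorem figureEight_firstBetti_le_one {Ω : Subgroup D} [Ω.Normal] (hΩ : Ω.index.Prime) :
    firstBetti Ω ≤ 1 := by
  have : Ω.FiniteIndex := ⟨hΩ.ne_zero⟩
  refine firstBetti_le_one h.figureEight_closure_eq_top h.figureEight_relation ?_
  have : Fact Ω.index.Prime := ⟨hΩ⟩
  have hcyclic : IsCyclic (D ⧸ Ω) := isCyclic_of_prime_card (p := Ω.index) rfl
  have hcomm (g g' : D ⧸ Ω) : g * g' = g' * g := hcyclic.isMulCommutative.is_comm.comm g g'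
  have hrel := congrArg (QuotientGroup.mk' Ω) h.figureEight_relation
  generalize X 0 * (X 1)⁻¹ = u at hrel ⊢
  simp only [map_mul, map_inv] at hrel
  rw [hcomm _ (QuotientGroup.mk' Ω u), mul_inv_cancel_right, hcomm _ (QuotientGroup.mk' Ω u)⁻¹,
    inv_mul_cancel_right, mul_inv_cancel, one_mul, left_eq_mul] at hrel
  exact (QuotientGroup.eq_one_iff u).mp hrel

end FigureEight

section Sister

variable (h : IsSchreierSystem A4.sister X)
include h

theorem sister_of_one :
    Abelianization.of (X 1) = Abelianization.of (X 0) * (Abelianization.of (X 2) ^ 2)⁻¹ := by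
  have hrel : X 2 * (X 0)⁻¹ * (X 2 * 1⁻¹) * (X 1 * 1⁻¹) = 1 :=
    h.relator (p := .c 1) (q := .c 2) (r := .cac 1 0) rfl rfl rfl
  have := congrArg (fun d => Additive.ofMul (Abelianization.of d)) hrel
  refine Additive.ofMul.injective ?_
  simp only [map_mul, map_inv, map_one, ofMul_mul, ofMul_inv, ofMul_one, ofMul_pow] at this ⊢
  linear_combination (norm := abel) this

theorem sister_of_two_pow_five : Abelianization.of (X 2) ^ 5 = 1 := by
  have hrel : X 0 * 1⁻¹ * (X 0 * (X 1)⁻¹) * (X 2 * (X 1)⁻¹) = 1 :=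
    h.relator (p := .cac 2 1) (q := .cac 1 1) (r := .c 0) rfl rfl rfl
  have := congrArg (fun d => Additive.ofMul (Abelianization.of d)) hrel
  refine Additive.ofMul.injective ?_
  simp only [map_mul, map_inv, map_one, h.sister_of_one, ofMul_mul, ofMul_inv, ofMul_one, ofMul_pow]
    at this ⊢
  linear_combination (norm := abel) this

theorem sister_closure_eq_top :
    Subgroup.closure {Abelianization.of (X 0), Abelianization.of (X 2)} = ⊤ := by
  set K := Subgroup.closure {Abelianization.of (X 0), Abelianization.of (X 2)}
  have h₀ : Abelianization.of (X 0) ∈ K := Subgroup.subset_closure (by simp)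
  have h₂ : Abelianization.of (X 2) ∈ K := Subgroup.subset_closure (by simp)
  have h₁ : Abelianization.of (X 1) ∈ K := by
    rw [h.sister_of_one]
    exact mul_mem h₀ (inv_mem (pow_mem h₂ 2))
  have hcomap : K.comap Abelianization.of = ⊤ := h.eq_top_of_forall_mem
    (Fin.forall_fin_succ.mpr ⟨h₀, Fin.forall_fin_two.mpr ⟨h₁, h₂⟩⟩)
  have hsurj : Function.Surjective (Abelianization.of (G := D)) := QuotientGroup.mk_surjective
  rw [← Subgroup.map_comap_eq_self_of_surjective hsurj K, hcomap,
    Subgroup.map_top_of_surjective _ hsurj]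

theorem sister_not_isOfFinOrder {f : D →* Multiplicative ℤ} (hf : Function.Surjective f) :
    ¬IsOfFinOrder (Abelianization.of (X 0)) := by
  intro hfin
  have hone {y : Abelianization D} (hy : IsOfFinOrder y) : y ∈ (Abelianization.lift f).ker :=
    ((Abelianization.lift f).isOfFinOrder hy).eq_one'
  have hker : (Abelianization.lift f).ker = ⊤ := by
    rw [eq_top_iff, ← h.sister_closure_eq_top, Subgroup.closure_le]
    rintro y (rfl | rfl)
    · exact hone hfin
    · exact hone (isOfFinOrder_iff_pow_eq_one.mpr ⟨5, by norm_num, h.sister_of_two_pow_five⟩)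
  obtain ⟨d, hd⟩ := hf (.ofAdd 1)
  have hd' : Abelianization.of d ∈ (Abelianization.lift f).ker := hker ▸ Subgroup.mem_top _
  rw [MonoidHom.mem_ker, Abelianization.lift_apply_of, hd] at hd'
  exact one_ne_zero (congrArg Multiplicative.toAdd hd' : (1 : ℤ) = 0)

theorem sister_nonempty_abelianization_mulEquiv {f : D →* Multiplicative ℤ}
    (hf : Function.Surjective f) (hne : Abelianization.of (X 2) ≠ 1) :
    Nonempty (Abelianization D ≃* Multiplicative ℤ × Multiplicative (ZMod 5)) := by
  have : Fact (Nat.Prime 5) := ⟨Nat.prime_five⟩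
  have horder : orderOf (Abelianization.of (X 2)) = 5 :=
    orderOf_eq_prime h.sister_of_two_pow_five hne
  rw [← horder]
  exact nonempty_mulEquiv_int_prod_zmod (h.sister_not_isOfFinOrder hf)
    (isOfFinOrder_iff_pow_eq_one.mpr ⟨5, by norm_num, h.sister_of_two_pow_five⟩)
    h.sister_closure_eq_top

end Sister

end IsSchreierSystem

open scoped IsMulCommutative in
theorem abelianization_of_ne_one {D Q : Type*} [Group D] [Group Q] {P : D →* Q} {z : D}
    (hP : P.range ≤ Subgroup.zpowers (P z)) (hz : P z ≠ 1) : Abelianization.of z ≠ 1 := by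
  intro hof
  let P' : D →* Subgroup.zpowers (P z) := P.codRestrict _ fun d => hP ⟨d, rfl⟩
  have hP' : P' z = 1 := by rw [← Abelianization.lift_apply_of P' z, hof, map_one]
  exact hz (congrArg Subtype.val hP')

end SchreierSystem

section Stabilizer

namespace A4

theorem sister_moves_two_zero : ∀ q, ∃ s, Moves sister 2 q s ∧ Moves sister 0 s q := by
  decide +kernel

theorem sister_moves_zero_zero_zero : ∀ q, ∃ s₁ s₂ s₃, Moves sister 0 q s₁ ∧
    Moves sister 0 s₁ s₂ ∧ Moves sister 0 s₂ s₃ ∧ Moves sister 1 q s₃ := by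
  decide +kernel

theorem exists_sister_moves_two_ne : ∃ q s, Moves sister 2 q s ∧ s ≠ q := by
  decide +kernel

end A4

namespace EisensteinTriple.IsGluing

variable {G : Type*} [Group G] {a b c : G} {t : EisensteinTriple a b c} {α : Fin 3 → A4}
  {X : Type*} [MulAction G X] {x : X}

/-- The Schreier generators, as elements of the stabilizer. -/
def gen (h : t.IsGluing α x) (j : Fin 3) : MulAction.stabilizer G x :=
  ⟨t.schreierGen α j, h.schreierGen_mem j⟩

theorem coe_label_gen (h : t.IsGluing α x) (p : A4) :
    ((A4.label h.gen p : MulAction.stabilizer G x) : G) = A4.label (t.schreierGen α) p := by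
  rcases p with _ | _ <;> rfl

theorem isSchreierSystem (h : t.IsGluing α x)
    (hinj : Function.Injective fun p => t.left.hom p • x)
    (hα : Function.Surjective (A4.glue α)) : IsSchreierSystem α h.gen where
  closure_eq_top := by
    refine Subgroup.map_injective (MulAction.stabilizer G x).subtype_injective ?_
    rw [MonoidHom.map_closure, ← Set.range_comp, ← MonoidHom.range_eq_map, Subgroup.range_subtype]
    exact (h.stabilizer_eq_closure hinj hα).symm
  relator hq hr hp := Subtype.ext <| by
    simpa [coe_label_gen] using t.label_schreierGen_relator α hq hr hp

section Sister

variable (h : t.IsGluing A4.sister x) (hbij : Function.Bijective fun p => t.left.hom p • x)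
include hbij

theorem sister_toPerm_zero : MulAction.toPermHom (MulAction.stabilizer G x) X (h.gen 0) =
    (MulAction.toPermHom (MulAction.stabilizer G x) X (h.gen 2))⁻¹ := by
  rw [eq_inv_iff_mul_eq_one]
  refine Equiv.ext fun y => ?_
  obtain ⟨q, rfl⟩ := hbij.surjective y
  obtain ⟨s, h₂, h₀⟩ := A4.sister_moves_two_zero q
  change t.schreierGen A4.sister 0 • t.schreierGen A4.sister 2 • t.left.hom q • x = _
  rw [h.schreierGen_smul_of_moves h₂, h.schreierGen_smul_of_moves h₀]
  rfl

theorem sister_toPerm_one : MulAction.toPermHom (MulAction.stabilizer G x) X (h.gen 1) =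
    MulAction.toPermHom (MulAction.stabilizer G x) X (h.gen 0) ^ 3 := by
  refine Equiv.ext fun y => ?_
  obtain ⟨q, rfl⟩ := hbij.surjective y
  obtain ⟨s₁, s₂, s₃, h₁, h₂, h₃, h₀⟩ := A4.sister_moves_zero_zero_zero q
  change t.schreierGen A4.sister 1 • t.left.hom q • x = t.schreierGen A4.sister 0 •
    t.schreierGen A4.sister 0 • t.schreierGen A4.sister 0 • t.left.hom q • x
  rw [h.schreierGen_smul_of_moves h₀, h.schreierGen_smul_of_moves h₁,
    h.schreierGen_smul_of_moves h₂, h.schreierGen_smul_of_moves h₃]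

theorem sister_of_gen_two_ne_one (hsys : IsSchreierSystem A4.sister h.gen) :
    Abelianization.of (h.gen 2) ≠ 1 := by
  let P := MulAction.toPermHom (MulAction.stabilizer G x) X
  refine abelianization_of_ne_one (P := P) ?_ ?_
  · have h₀ : P (h.gen 0) ∈ Subgroup.zpowers (P (h.gen 2)) := by
      rw [show P (h.gen 0) = (P (h.gen 2))⁻¹ from h.sister_toPerm_zero hbij]
      exact inv_mem (Subgroup.mem_zpowers _)
    have h₁ : P (h.gen 1) ∈ Subgroup.zpowers (P (h.gen 2)) := by
      rw [show P (h.gen 1) = P (h.gen 0) ^ 3 from h.sister_toPerm_one hbij]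
      exact pow_mem h₀ 3
    have htop : (Subgroup.zpowers (P (h.gen 2))).comap P = ⊤ :=
      hsys.eq_top_of_forall_mem (Fin.forall_fin_succ.mpr
        ⟨h₀, Fin.forall_fin_two.mpr ⟨h₁, Subgroup.mem_zpowers _⟩⟩)
    rw [MonoidHom.range_eq_map, Subgroup.map_le_iff_le_comap, htop]
  · intro hone
    obtain ⟨q, s, hqs, hne⟩ := A4.exists_sister_moves_two_ne
    refine hne (hbij.injective ?_)
    rw [← h.schreierGen_smul_of_moves hqs]
    exact Equiv.congr_fun hone (t.left.hom q • x)

end Sister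

end EisensteinTriple.IsGluing

end Stabilizer

section Classification

variable {G : Type*} [Group G] {a b c : G} {Δ : Subgroup G}

theorem IsGood.map_equiv (h : IsGood Δ) {H : Type*} [Group H] (e : G ≃* H) :
    IsGood (Δ.map e.toMonoidHom) := by
  obtain ⟨hfin, hle, ⟨f, hf⟩, Ω, hnormal, hindex, g, hg⟩ := h
  let eΔ : Δ ≃* Δ.map e.toMonoidHom := e.subgroupMap Δ
  have hmap : (Δ.map e.toMonoidHom).index = Δ.index := Δ.index_map_equiv e
  let eΩ : Ω ≃* Ω.map eΔ.toMonoidHom := eΔ.subgroupMap Ω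
  exact ⟨⟨hmap.trans_ne hfin.index_ne_zero⟩, hmap.trans_le hle,
    ⟨f.comp eΔ.symm.toMonoidHom, hf.comp eΔ.symm.surjective⟩,
    Ω.map eΔ.toMonoidHom, hnormal.map _ eΔ.surjective, (Ω.index_map_equiv eΔ).trans hindex,
    g.comp eΩ.symm.toMonoidHom, hg.comp eΩ.symm.surjective⟩

theorem subgroupConj_stabilizer (x : G ⧸ Δ) : SubgroupConj G Δ (MulAction.stabilizer G x) := by
  obtain ⟨g, rfl⟩ := QuotientGroup.mk_surjective x
  refine ⟨g, .symm ?_⟩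
  have := MulAction.stabilizer_smul_eq_stabilizer_map_conj g (QuotientGroup.mk 1 : G ⧸ Δ)
  rwa [MulAction.stabilizer_quotient, MulAction.Quotient.smul_mk, smul_eq_mul, mul_one] at this

theorem IsGood.stabilizer (h : IsGood Δ) (x : G ⧸ Δ) : IsGood (MulAction.stabilizer G x) := by
  obtain ⟨g, hg⟩ := subgroupConj_stabilizer x
  rw [← hg]
  exact h.map_equiv (MulAut.conj g)

theorem IsGood.smul_ne (h : IsGood Δ) (t : EisensteinTriple a b c) (x : G ⧸ Δ) :
    a • x ≠ x ∧ b • x ≠ x ∧ c • x ≠ x := by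
  obtain ⟨-, ha, hc⟩ := h.card_fixedBy t
  have hb : Nat.card (MulAction.fixedBy (G ⧸ Δ) b) = 0 := by
    rw [← t.conj_mul_left, card_fixedBy_conj, ha]
  have := h.1
  have hne {g : G} (hg : Nat.card (MulAction.fixedBy (G ⧸ Δ) g) = 0) : g • x ≠ x :=
    fun hx => (Finite.card_eq_zero_iff.mp hg).false ⟨x, hx⟩
  exact ⟨hne ha, hne hb, hne hc⟩

theorem IsGood.left_hom_smul_bijective (h : IsGood Δ) (t : EisensteinTriple a b c) (x : G ⧸ Δ) :
    Function.Bijective fun p => t.left.hom p • x := by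
  have := h.1
  refine (t.left.hom_smul_injective (fun y => (h.smul_ne t y).1)
    (fun y => (h.smul_ne t y).2.2) x).bijective_of_nat_card_le ?_
  rw [← Subgroup.index, (h.card_fixedBy t).1, Nat.card_eq_fintype_card]
  rfl

theorem IsGood.glue_surjective (h : IsGood Δ) {t : EisensteinTriple a b c}
    {α : Fin 3 → A4} {x : G ⧸ Δ} (hx : t.IsGluing α x) : Function.Surjective (A4.glue α) :=
  Finite.surjective_of_injective (hx.glue_injective (t.right.hom_smul_injective
    (fun y => (h.smul_ne t y).2.1) (fun y => (h.smul_ne t y).2.2) x))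

theorem IsGood.isSchreierSystem_gen (h : IsGood Δ) {t : EisensteinTriple a b c}
    {α : Fin 3 → A4} {x : G ⧸ Δ} (hx : t.IsGluing α x) : IsSchreierSystem α hx.gen :=
  hx.isSchreierSystem (h.left_hom_smul_bijective t x).injective (h.glue_surjective hx)

theorem IsGood.exists_isGluing_sister (h : IsGood Δ) (t : EisensteinTriple a b c) :
    ∃ x : G ⧸ Δ, t.IsGluing A4.sister x := by
  obtain ⟨x, ⟨i, hx⟩ | hx | hx⟩ := t.exists_isGluing (h.card_fixedBy t).1
    (fun y : G ⧸ Δ => (h.smul_ne t y).1) (fun y => (h.smul_ne t y).2.1)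
    (fun y => (h.smul_ne t y).2.2)
  · obtain ⟨-, -, ⟨f, hf⟩, -⟩ := h.stabilizer x
    obtain ⟨χ, hχ⟩ := exists_character_ne_zero hf
    exact absurd ((h.isSchreierSystem_gen hx).character_eq_zero_of_torsion χ) hχ
  · obtain ⟨hfin, -, -, Ω, hnormal, hindex, g, hg⟩ := h.stabilizer x
    have hle := (h.isSchreierSystem_gen hx).figureEight_firstBetti_le_one
      (hindex ▸ Nat.prime_five)
    have : Group.FG Ω := by
      have := t.group_fg
      have := Subgroup.fg_of_index_ne_zero (MulAction.stabilizer G x)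
      have : Ω.FiniteIndex := ⟨by rw [hindex]; norm_num⟩
      exact Subgroup.fg_of_index_ne_zero Ω
    have hge := card_le_firstBetti hg
    simp only [Fintype.card_fin] at hge
    omega
  · exact ⟨x, hx⟩

theorem IsGood.subgroupConj_closure (h : IsGood Δ) (t : EisensteinTriple a b c) :
    SubgroupConj G Δ (Subgroup.closure (Set.range (t.schreierGen A4.sister))) := by
  obtain ⟨x, hx⟩ := h.exists_isGluing_sister t
  rw [← hx.stabilizer_eq_closure (h.left_hom_smul_bijective t x).injective (h.glue_surjective hx)]
  exact subgroupConj_stabilizer x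

theorem IsGood.nonempty_abelianization_mulEquiv (h : IsGood Δ) (t : EisensteinTriple a b c) :
    Nonempty (Abelianization Δ ≃* Multiplicative ℤ × Multiplicative (ZMod 5)) := by
  obtain ⟨x, hx⟩ := h.exists_isGluing_sister t
  obtain ⟨g, hg⟩ := subgroupConj_stabilizer x
  obtain ⟨-, -, ⟨f, hf⟩, -⟩ := h.stabilizer x
  have hsys := h.isSchreierSystem_gen hx
  obtain ⟨e⟩ := hsys.sister_nonempty_abelianization_mulEquiv hf
    (hx.sister_of_gen_two_ne_one (h.left_hom_smul_bijective t x) hsys)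
  let eΔ : Δ ≃* MulAction.stabilizer G x :=
    ((MulAut.conj g).subgroupMap Δ).trans (MulEquiv.subgroupCongr hg)
  exact ⟨eΔ.abelianizationCongr.trans e⟩

end Classification

section SpecialLinear

open Matrix SpecialLinearGroup

variable {R : Type*} [CommRing R]

/-- The unipotent matrix `!![1, k; 0, 1]`. -/
def upper (k : R) : SpecialLinearGroup (Fin 2) R :=
  transvection zero_ne_one k

variable (R) in
/-- The matrix `!![0, 1; -1, 0]`, which represents the nontrivial element of the Weyl group. -/
def weyl : SpecialLinearGroup (Fin 2) R :=
  ⟨!![0, 1; -1, 0], by simp⟩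

theorem coe_upper (k : R) : (upper k : Matrix (Fin 2) (Fin 2) R) = !![1, k; 0, 1] := by
  ext i j
  fin_cases i <;> fin_cases j <;> simp [upper, transvection_coe]

theorem coe_weyl : (weyl R : Matrix (Fin 2) (Fin 2) R) = !![0, 1; -1, 0] :=
  rfl

theorem upper_mul_apply_zero (k : R) (A : SpecialLinearGroup (Fin 2) R) (j : Fin 2) :
    (upper k * A) 0 j = A 0 j + k * A 1 j := by
  simp [coe_upper, Matrix.mul_apply]

theorem weyl_mul_apply_zero (A : SpecialLinearGroup (Fin 2) R) (j : Fin 2) :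
    (weyl R * A) 0 j = A 1 j := by
  simp [coe_weyl, Matrix.mul_apply]

theorem weyl_mul_apply_one (A : SpecialLinearGroup (Fin 2) R) (j : Fin 2) :
    (weyl R * A) 1 j = -A 0 j := by
  simp [coe_weyl, Matrix.mul_apply]

theorem upper_mul_eq_weyl_mul_upper {A : SpecialLinearGroup (Fin 2) R} (hA : A 1 0 = -1) :
    upper (A 0 0) * A = weyl R * upper (-A 1 1) := by
  have hdet := A.det_coe
  rw [Matrix.det_fin_two, hA] at hdet
  ext i j
  fin_cases i <;> fin_cases j <;> simp [coe_upper, coe_weyl, Matrix.mul_apply, hA]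
  linear_combination hdet

section Generation

variable {H : Subgroup (SpecialLinearGroup (Fin 2) R)}

theorem mem_of_apply_one_zero_eq_neg_one (hupper : ∀ k : R, upper k ∈ H) (hweyl : weyl R ∈ H)
    {A : SpecialLinearGroup (Fin 2) R} (hA : A 1 0 = -1) : A ∈ H := by
  rw [← H.mul_mem_cancel_left (hupper (A 0 0)), upper_mul_eq_weyl_mul_upper hA]
  exact H.mul_mem hweyl (hupper _)

theorem mem_of_apply_one_zero_eq_zero (hupper : ∀ k : R, upper k ∈ H) (hweyl : weyl R ∈ H)
    {A : SpecialLinearGroup (Fin 2) R} (hA : A 1 0 = 0) : A ∈ H := by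
  have hdet := A.det_coe
  rw [Matrix.det_fin_two, hA] at hdet
  rw [← H.mul_mem_cancel_left hweyl, ← H.mul_mem_cancel_left (hupper (-A 1 1)),
    ← H.mul_mem_cancel_left hweyl]
  refine mem_of_apply_one_zero_eq_neg_one hupper hweyl ?_
  rw [weyl_mul_apply_one, upper_mul_apply_zero, weyl_mul_apply_zero, weyl_mul_apply_one, hA]
  linear_combination -hdet

/-- The Euclidean algorithm on the first column of a matrix. -/
theorem eq_top_of_upper_mem_of_weyl_mem {ν : R → ℕ}
    (hν : ∀ x y : R, y ≠ 0 → ∃ q, ν (x + q * y) < ν y) (hupper : ∀ k : R, upper k ∈ H)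
    (hweyl : weyl R ∈ H) : H = ⊤ := by
  refine (Subgroup.eq_top_iff' H).mpr fun A => ?_
  induction hn : ν (A 1 0) using Nat.strong_induction_on generalizing A with
  | _ n ih =>
    by_cases hA : A 1 0 = 0
    · exact mem_of_apply_one_zero_eq_zero hupper hweyl hA
    · obtain ⟨q, hq⟩ := hν (A 0 0) (A 1 0) hA
      rw [← H.mul_mem_cancel_left (hupper q), ← H.mul_mem_cancel_left (H.inv_mem hweyl)]
      refine ih _ (hn ▸ hq) _ ?_
      simp [← upper_mul_apply_zero, coe_weyl, Matrix.mul_apply, Matrix.adjugate_fin_two]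

/-- The `k` for which a subgroup contains the unipotent matrix `!![1, k; 0, 1]`. -/
def unipotentEntries (H : Subgroup (SpecialLinearGroup (Fin 2) R)) : AddSubgroup R where
  carrier := {k | upper k ∈ H}
  zero_mem' := by simp [upper, H.one_mem]
  add_mem' {k l} hk hl := by
    change upper (k + l) ∈ H
    rw [upper, transvection_add]
    exact H.mul_mem hk hl
  neg_mem' {k} hk := by
    change upper (-k) ∈ H
    rw [upper, ← transvection_inv]
    exact H.inv_mem hk

end Generation

end SpecialLinear

section Eisenstein

/-- The norm `x² - xy + y²` of the Eisenstein integer `x + yω`. -/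
def eisensteinNorm (x y : ℤ) : ℤ :=
  x ^ 2 - x * y + y ^ 2

theorem eisensteinNorm_nonneg (x y : ℤ) : 0 ≤ eisensteinNorm x y := by
  rw [eisensteinNorm]
  nlinarith [sq_nonneg (2 * x - y), sq_nonneg y]

theorem eisensteinNorm_eq_zero {x y : ℤ} (h : eisensteinNorm x y = 0) : x = 0 ∧ y = 0 := by
  rw [eisensteinNorm] at h
  have hx : x ^ 2 = 0 := by nlinarith [sq_nonneg (2 * y - x), sq_nonneg x]
  have hy : y ^ 2 = 0 := by nlinarith [sq_nonneg (2 * x - y), sq_nonneg y]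
  exact ⟨pow_eq_zero_iff two_ne_zero |>.mp hx, pow_eq_zero_iff two_ne_zero |>.mp hy⟩

theorem exists_neg_le_two_mul_sub_mul_le (s : ℤ) {n : ℤ} (hn : 0 < n) :
    ∃ k : ℤ, -n ≤ 2 * (s - k * n) ∧ 2 * (s - k * n) ≤ n := by
  refine ⟨(2 * s + n) / (2 * n), ?_, ?_⟩
  · have := Int.ediv_mul_le (2 * s + n) (b := 2 * n) (by omega)
    linarith
  · have := Int.lt_ediv_add_one_mul_self (2 * s + n) (b := 2 * n) (by omega)
    linarith

theorem four_mul_eisensteinNorm_le {s r n : ℤ} (hs : -n ≤ 2 * s ∧ 2 * s ≤ n)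
    (hr : -n ≤ 2 * r ∧ 2 * r ≤ n) : 4 * eisensteinNorm s r ≤ 3 * n ^ 2 := by
  obtain ⟨hs₁, hs₂⟩ := hs
  obtain ⟨hr₁, hr₂⟩ := hr
  have hs₁ : 0 ≤ n + 2 * s := by linarith
  have hr₁ : 0 ≤ n + 2 * r := by linarith
  have hs₂ := sub_nonneg.mpr hs₂
  have hr₂ := sub_nonneg.mpr hr₂
  rw [eisensteinNorm]
  nlinarith [mul_nonneg hs₂ hs₁, mul_nonneg hr₂ hr₁, mul_nonneg hs₂ hr₂, mul_nonneg hs₁ hr₁,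
    mul_nonneg hs₂ hr₁, mul_nonneg hs₁ hr₂]

-- The quotient rounds both coordinates of `(x + yω)(u + vω̄) / N(u + vω)` to nearest integers.
theorem exists_eisensteinNorm_sub_lt (x y : ℤ) {u v : ℤ} (h : 0 < eisensteinNorm u v) :
    ∃ k l : ℤ, eisensteinNorm (x - (k * u - l * v)) (y - (k * v + l * u - l * v)) <
      eisensteinNorm u v := by
  set n := eisensteinNorm u v with hn
  obtain ⟨k, hk⟩ := exists_neg_le_two_mul_sub_mul_le (x * u - x * v + y * v) h
  obtain ⟨l, hl⟩ := exists_neg_le_two_mul_sub_mul_le (y * u - x * v) h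
  refine ⟨k, l, ?_⟩
  have hmul : eisensteinNorm (x - (k * u - l * v)) (y - (k * v + l * u - l * v)) * n =
      eisensteinNorm (x * u - x * v + y * v - k * n) (y * u - x * v - l * n) := by
    simp only [hn, eisensteinNorm]
    ring
  have hle := four_mul_eisensteinNorm_le hk hl
  nlinarith [pow_pos h 2]

variable {R : Type*} [CommRing R] {η : R}

theorem exists_euclidean_function (hη : η ^ 2 + η + 1 = 0)
    (hspan : ∀ r : R, ∃ x y : ℤ, r = x + y * η) :
    ∃ ν : R → ℕ, ∀ x y : R, y ≠ 0 → ∃ q, ν (x + q * y) < ν y := by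
  let norms (r : R) : Set ℕ := {n | ∃ x y : ℤ, r = x + y * η ∧ n = (eisensteinNorm x y).toNat}
  refine ⟨fun r => sInf (norms r), fun r s hs => ?_⟩
  obtain ⟨x, y, hr⟩ := hspan r
  obtain ⟨u, v, huv, hν⟩ : sInf (norms s) ∈ norms s := by
    obtain ⟨u, v, huv⟩ := hspan s
    exact Nat.sInf_mem ⟨_, u, v, huv, rfl⟩
  have hpos : 0 < eisensteinNorm u v := by
    refine (eisensteinNorm_nonneg u v).lt_of_ne' fun h => hs ?_
    obtain ⟨rfl, rfl⟩ := eisensteinNorm_eq_zero h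
    simpa using huv
  obtain ⟨k, l, hlt⟩ := exists_eisensteinNorm_sub_lt x y hpos
  refine ⟨-(k + l * η), lt_of_le_of_lt (Nat.sInf_le ⟨_, _, ?_, rfl⟩)
    (hν ▸ (Int.toNat_lt_toNat hpos).mpr hlt)⟩
  rw [hr, huv]
  push_cast
  linear_combination (-l * v : R) * hη

end Eisenstein

section ProjectiveLinear

open Matrix SpecialLinearGroup

variable {R : Type*} [CommRing R]

theorem mk_eq_mk_of_eq_neg {A B : SpecialLinearGroup (Fin 2) R} (h : A = -B) :
    (A : PSL2 R) = B := by
  refine QuotientGroup.eq.mpr (Subgroup.mem_center_iff.mpr fun C => ?_)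
  simp [h]

theorem mk_eq_one_of_eq_neg_one {A : SpecialLinearGroup (Fin 2) R} (h : A = -1) :
    (A : PSL2 R) = 1 :=
  mk_eq_mk_of_eq_neg h

variable {η : R}

/-- The second generator of order two of `PSL(2, ℤ[ω])`; the first one is `weyl`. -/
def secondInvolution (hη : η ^ 2 + η + 1 = 0) : SpecialLinearGroup (Fin 2) R :=
  ⟨!![0, η; 1 + η, 0], by
    rw [Matrix.det_fin_two_of]
    linear_combination -hη⟩

/-- The generator of order three of `PSL(2, ℤ[ω])`. -/
def rotation (hη : η ^ 2 + η + 1 = 0) : SpecialLinearGroup (Fin 2) R :=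
  ⟨!![1, 1 + η; η, 0], by
    rw [Matrix.det_fin_two_of]
    linear_combination -hη⟩

variable (hη : η ^ 2 + η + 1 = 0)

theorem coe_secondInvolution :
    (secondInvolution hη : Matrix (Fin 2) (Fin 2) R) = !![0, η; 1 + η, 0] :=
  rfl

theorem coe_rotation : (rotation hη : Matrix (Fin 2) (Fin 2) R) = !![1, 1 + η; η, 0] :=
  rfl

theorem weyl_mul_self : weyl R * weyl R = -1 := by
  ext i j
  fin_cases i <;> fin_cases j <;> simp [coe_weyl, Matrix.mul_apply]

theorem secondInvolution_mul_self : secondInvolution hη * secondInvolution hη = -1 := by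
  ext i j
  fin_cases i <;> fin_cases j <;> simp [coe_secondInvolution, Matrix.mul_apply] <;> grind

theorem rotation_pow_three : rotation hη ^ 3 = -1 := by
  rw [pow_three]
  ext i j
  fin_cases i <;> fin_cases j <;> simp [coe_rotation, Matrix.mul_apply] <;> grind

theorem weyl_mul_rotation_pow_three : (weyl R * rotation hη) ^ 3 = 1 := by
  rw [pow_three]
  ext i j
  fin_cases i <;> fin_cases j <;> simp [coe_weyl, coe_rotation, Matrix.mul_apply] <;> grind

theorem secondInvolution_mul_rotation_pow_three :
    (secondInvolution hη * rotation hη) ^ 3 = 1 := by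
  rw [pow_three]
  ext i j
  fin_cases i <;> fin_cases j <;>
    simp [coe_secondInvolution, coe_rotation, Matrix.mul_apply] <;> grind

theorem weyl_mul_secondInvolution_pow_three : (weyl R * secondInvolution hη) ^ 3 = -1 := by
  rw [pow_three]
  ext i j
  fin_cases i <;> fin_cases j <;>
    simp [coe_weyl, coe_secondInvolution, Matrix.mul_apply] <;> grind

theorem upper_one_eq :
    upper 1 = -(weyl R * secondInvolution hη * rotation hη * secondInvolution hη) := by
  ext i j
  fin_cases i <;> fin_cases j <;>
    simp [coe_upper, coe_weyl, coe_secondInvolution, coe_rotation] <;> grind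

theorem upper_eq :
    upper η = -(secondInvolution hη * weyl R * rotation hη * weyl R) := by
  ext i j
  fin_cases i <;> fin_cases j <;>
    simp [coe_upper, coe_weyl, coe_secondInvolution, coe_rotation] <;> grind

include hη in
theorem eq_top_of_upper_one_mem_of_upper_mem (hspan : ∀ r : R, ∃ x y : ℤ, r = x + y * η)
    {H : Subgroup (SpecialLinearGroup (Fin 2) R)} (hone : upper 1 ∈ H) (hH : upper η ∈ H)
    (hweyl : weyl R ∈ H) : H = ⊤ := by
  obtain ⟨ν, hν⟩ := exists_euclidean_function hη hspan
  refine eq_top_of_upper_mem_of_weyl_mem hν (fun k => ?_) hweyl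
  obtain ⟨x, y, rfl⟩ := hspan k
  have hk : x • 1 + y • η ∈ unipotentEntries H :=
    add_mem (zsmul_mem (S := AddSubgroup R) hone x) (zsmul_mem (S := AddSubgroup R) hH y)
  rwa [zsmul_one, zsmul_eq_mul] at hk

theorem closure_weyl_secondInvolution_rotation_eq_top
    (hspan : ∀ r : R, ∃ x y : ℤ, r = x + y * η) :
    Subgroup.closure {(weyl R : PSL2 R), (secondInvolution hη : PSL2 R),
      (rotation hη : PSL2 R)} = ⊤ := by
  set K := Subgroup.closure {(weyl R : PSL2 R), (secondInvolution hη : PSL2 R),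
    (rotation hη : PSL2 R)}
  have hweyl : (weyl R : PSL2 R) ∈ K := Subgroup.subset_closure (by simp)
  have hsecond : (secondInvolution hη : PSL2 R) ∈ K := Subgroup.subset_closure (by simp)
  have hrotation : (rotation hη : PSL2 R) ∈ K := Subgroup.subset_closure (by simp)
  have hone : (upper (1 : R) : PSL2 R) ∈ K := by
    rw [mk_eq_mk_of_eq_neg (upper_one_eq hη)]
    exact K.mul_mem (K.mul_mem (K.mul_mem hweyl hsecond) hrotation) hsecond
  have hmem : (upper η : PSL2 R) ∈ K := by
    rw [mk_eq_mk_of_eq_neg (upper_eq hη)]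
    exact K.mul_mem (K.mul_mem (K.mul_mem hsecond hweyl) hrotation) hweyl
  let π := QuotientGroup.mk' (Subgroup.center (SpecialLinearGroup (Fin 2) R))
  have hπ : Function.Surjective π := QuotientGroup.mk'_surjective _
  have hcomap : K.comap π = ⊤ :=
    eq_top_of_upper_one_mem_of_upper_mem hη hspan (H := K.comap π) hone hmem hweyl
  rw [← Subgroup.map_comap_eq_self_of_surjective hπ K, hcomap,
    Subgroup.map_top_of_surjective π hπ]

theorem eisensteinTriple_weyl_secondInvolution_rotation
    (hspan : ∀ r : R, ∃ x y : ℤ, r = x + y * η) :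
    EisensteinTriple (weyl R : PSL2 R) (secondInvolution hη : PSL2 R) (rotation hη : PSL2 R) where
  left.mul_self_left := mk_eq_one_of_eq_neg_one weyl_mul_self
  left.pow_three_right := mk_eq_one_of_eq_neg_one (rotation_pow_three hη)
  left.mul_pow_three := congrArg _ (weyl_mul_rotation_pow_three hη)
  right.mul_self_left := mk_eq_one_of_eq_neg_one (secondInvolution_mul_self hη)
  right.pow_three_right := mk_eq_one_of_eq_neg_one (rotation_pow_three hη)
  right.mul_pow_three := congrArg _ (secondInvolution_mul_rotation_pow_three hη)
  mul_pow_three := mk_eq_one_of_eq_neg_one (weyl_mul_secondInvolution_pow_three hη)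
  closure_eq_top := closure_weyl_secondInvolution_rotation_eq_top hη hspan

end ProjectiveLinear

theorem exists_eisenstein_eq_add_mul : ∃ η : Eisenstein, η ^ 2 + η + 1 = 0 ∧
    ∀ r : Eisenstein, ∃ x y : ℤ, r = x + y * η := by
  have : IsCyclotomicExtension {3} ℚ (CyclotomicField 3 ℚ) :=
    CyclotomicField.isCyclotomicExtension 3 ℚ
  have hζ := IsCyclotomicExtension.zeta_spec 3 ℚ (CyclotomicField 3 ℚ)
  have hη : hζ.toInteger ^ 2 = -hζ.toInteger - 1 := IsCyclotomicExtension.Rat.Three.eta_sq hζ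
  refine ⟨hζ.toInteger, by linear_combination hη, fun r => ?_⟩
  let B := hζ.integralPowerBasis
  have hdim : B.dim = 2 := by
    rw [hζ.integralPowerBasis_dim, Nat.totient_prime Nat.prime_three]
  refine ⟨B.basis.repr r (Fin.cast hdim.symm 0), B.basis.repr r (Fin.cast hdim.symm 1), ?_⟩
  have hsum := B.basis.sum_repr r
  rw [← (finCongr hdim.symm).sum_comp, Fin.sum_univ_two] at hsum
  simpa [B] using hsum.symm

theorem exists_eisensteinTriple : ∃ a b c : PSL2 Eisenstein, EisensteinTriple a b c := by
  obtain ⟨η, hη, hspan⟩ := exists_eisenstein_eq_add_mul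
  exact ⟨_, _, _, eisensteinTriple_weyl_secondInvolution_rotation hη hspan⟩

end GoodSubgroup

theorem good_subgroup_unique_up_to_conjugacy_general {G : Type*} [Group G] {a b c : G}
    (t : GoodSubgroup.EisensteinTriple a b c) :
    (∀ Δ Δ' : Subgroup G, GoodSubgroup.IsGood Δ → GoodSubgroup.IsGood Δ' →
      SubgroupConj G Δ Δ') ∧
    ∀ Δ : Subgroup G, GoodSubgroup.IsGood Δ →
      Δ.index = 12 ∧
        Nonempty (Abelianization Δ ≃* Multiplicative ℤ × Multiplicative (ZMod 5)) :=
  ⟨fun _ _ h h' => (h.subgroupConj_closure t).trans (h'.subgroupConj_closure t).symm,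
    fun _ h => ⟨(h.card_fixedBy t).1, h.nonempty_abelianization_mulEquiv t⟩⟩

/-- Any two good subgroups of `Γ = PSL(2, ℤ[ω])` are conjugate; moreover every
good subgroup has index exactly `12` and abelianization `ℤ × ℤ/5ℤ` (it is the
fundamental group `Γ_s` of the sister of the figure-eight knot complement). -/
theorem good_subgroup_unique_up_to_conjugacy :
    (∀ Δ Δ' : Subgroup (PSL2 Eisenstein), GoodSubgroup Δ → GoodSubgroup Δ' →
      SubgroupConj (PSL2 Eisenstein) Δ Δ') ∧
    ∀ Δ : Subgroup (PSL2 Eisenstein), GoodSubgroup Δ →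
      Δ.index = 12 ∧
        Nonempty (Abelianization Δ ≃* Multiplicative ℤ × Multiplicative (ZMod 5)) := by
  obtain ⟨a, b, c, t⟩ := GoodSubgroup.exists_eisensteinTriple
  exact good_subgroup_unique_up_to_conjugacy_general t
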